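/- arXiv:2312.15303 — 2 statements merged into one kernel-verified Lean document; each statement's English description precedes it below -/
import Mathlib

section
/- For every interval D ⊆ [0,1] and every integer n ≥ 0, the integral ∫_D (log q_min(x,δ) + (1/2)·log δ)^n dx converges, as δ → 0⁺, to μ_n·Leb(D), where μ_n = ∫_ℝ s^n·η_log(s) ds. -/
open MeasureTheory Filter

/-- The limiting density of the logarithm of smallest denominators. -/
noncomputable def etaLog (s : ℝ) : ℝ :=
  if s ≤ 0 then 6 / Real.pi ^ 2 * Real.exp (2 * s)
  else if s ≤ Real.log 2 then 6 / Real.pi ^ 2 * (-Real.exp (2 * s) + 2 + 4 * s)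
  else 6 / Real.pi ^ 2 * (-Real.exp (2 * s) + 2
    + 2 * Real.exp (2 * s) * Real.sqrt (1 / 4 - Real.exp (-2 * s))
    - 4 * Real.log (1 / 2 + Real.sqrt (1 / 4 - Real.exp (-2 * s))))

/-- The smallest denominator of all rationals in the interval `(x - δ/2, x + δ/2)`. -/
noncomputable def qmin (x δ : ℝ) : ℕ :=
  sInf {q : ℕ | 0 < q ∧ ∃ p : ℤ, x - δ / 2 < (p : ℝ) / q ∧ (p : ℝ) / q < x + δ / 2}

/-!
Put `h = √δ`. Modulo 1 the set of `x` with `qmin x δ = q` splits into one piece near each reduced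
fraction `p / q`, and the Farey neighbours of `p / q` show that the length of this piece depends
only on `h q` and on the inverse of `p` modulo `q`. By Kloosterman's elementary fourth-moment bound
for his sums, these inverses equidistribute modulo `q` even when weighted by an additive character
of `p`. Hence each Fourier mode of the `n`-th power of `log (h q_min)` is asymptotically a Riemann
sum over `h q` weighted by `φ q`: a nonzero mode tends to `0`, and since `φ q` has mean density
`6 / π²` times `q`, the zeroth mode tends to `μ_n`. The zeroth mode of exponent `2 n` bounds the
`n`-th powers in `L²`, so that the convergence of the Fourier coefficients is weak convergence in
`L²` of the circle, which is tested on the indicator function of `D`.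
-/

open scoped Topology

/-! ### Kloosterman sums -/

section Annihilator

open Finset

variable {R : Type*} [CommRing R] [Fintype R] [DecidableEq R]

/-- The number of elements of a finite commutative ring that are annihilated by `c`. -/
def annihilatorCard (c : R) : ℕ := #{z : R | c * z = 0}

lemma card_filter_mul_eq_le_annihilatorCard (c e : R) :
    #{z : R | c * z = e} ≤ annihilatorCard c := by
  rcases ({z : R | c * z = e} : Finset R).eq_empty_or_nonempty with hempty | ⟨w, hw⟩
  · simp [hempty]
  · rw [mem_filter_univ] at hw
    refine card_le_card_of_injOn (· - w) (fun z hz => ?_) sub_left_injective.injOn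
    simp only [coe_filter_univ, Set.mem_ofPred_eq] at hz ⊢
    rw [mul_sub, hz, hw, sub_self]

lemma annihilatorCard_mul_le (b c : R) :
    annihilatorCard (b * c) ≤ annihilatorCard b * annihilatorCard c := by
  rw [mul_comm (annihilatorCard b)]
  refine card_le_mul_card_image_of_maps_to (f := (c * ·)) (fun z hz => ?_) _ fun y _ => ?_
  · simpa [mul_assoc] using hz
  · exact (card_le_card fun z => by simp).trans (card_filter_mul_eq_le_annihilatorCard c y)

lemma annihilatorCard_neg (c : R) : annihilatorCard (-c) = annihilatorCard c := by
  simp [annihilatorCard]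

end Annihilator

section KloostermanSum

open Finset

variable {R : Type*} [CommRing R] [Fintype R] [DecidableEq R]

/-- The Kloosterman sum `∑ ψ (a u⁻¹ + b u)` over the units `u` of a finite commutative ring. -/
noncomputable def kloostermanSum (ψ : AddChar R ℂ) (a b : R) : ℂ :=
  ∑ u : Rˣ, ψ (a * ↑u⁻¹ + b * u)

/-- The number of coincidences among the pairs `(u⁻¹ + v⁻¹, u + v)` for units `u` and `v`; it is
the fourth moment of the Kloosterman sums over all their parameters. -/
def kloostermanEnergy (R : Type*) [CommRing R] [Fintype R] [DecidableEq R] : ℕ :=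
  #{p : (Rˣ × Rˣ) × (Rˣ × Rˣ) |
    (↑p.1.1⁻¹ + ↑p.1.2⁻¹ : R) = ↑p.2.1⁻¹ + ↑p.2.2⁻¹ ∧ (p.1.1 + p.1.2 : R) = p.2.1 + p.2.2}

lemma kloostermanSum_comm (ψ : AddChar R ℂ) (a b : R) :
    kloostermanSum ψ a b = kloostermanSum ψ b a := by
  rw [kloostermanSum, ← Equiv.sum_comp (Equiv.inv Rˣ)]
  exact sum_congr rfl fun u _ => by simp [add_comm]

lemma kloostermanSum_mul_unit (ψ : AddChar R ℂ) (a b : R) (u : Rˣ) :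
    kloostermanSum ψ (a * u) (b * ↑u⁻¹) = kloostermanSum ψ a b := by
  rw [kloostermanSum, ← Equiv.sum_comp (Equiv.mulLeft u)]
  refine sum_congr rfl fun v _ => congrArg ψ ?_
  simp only [Equiv.coe_mulLeft, mul_inv_rev, Units.val_mul]
  linear_combination (a * ↑v⁻¹ + b * v) * u.mul_inv

lemma kloostermanSum_sq (ψ : AddChar R ℂ) (a b : R) :
    kloostermanSum ψ a b ^ 2 =
      ∑ p : Rˣ × Rˣ, ψ (a * (↑p.1⁻¹ + ↑p.2⁻¹) + b * (p.1 + p.2)) := by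
  rw [sq, kloostermanSum, sum_mul_sum, Fintype.sum_prod_type]
  refine sum_congr rfl fun u _ => sum_congr rfl fun v _ => ?_
  rw [← ψ.map_add_eq_mul]
  congr 1
  ring

/-- Parseval's identity for the function counting the values of `i ↦ (f i, g i)`. -/
lemma sum_norm_sum_addChar_sq {ψ : AddChar R ℂ} (hψ : ψ.IsPrimitive) {ι : Type*} [Fintype ι]
    (f g : ι → R) :
    ∑ a, ∑ b, ‖∑ i, ψ (a * f i + b * g i)‖ ^ 2 =
      (Fintype.card R : ℝ) ^ 2 * #{p : ι × ι | f p.1 = f p.2 ∧ g p.1 = g p.2} := by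
  have expand (a b : R) : ((‖∑ i, ψ (a * f i + b * g i)‖ ^ 2 : ℝ) : ℂ) =
      ∑ p : ι × ι, ψ (a * (f p.1 - f p.2)) * ψ (b * (g p.1 - g p.2)) := by
    push_cast
    rw [← Complex.mul_conj', map_sum, sum_mul_sum, Fintype.sum_prod_type]
    refine sum_congr rfl fun i _ => sum_congr rfl fun j _ => ?_
    rw [← ψ.map_neg_eq_conj, ← ψ.map_add_eq_mul, ← ψ.map_add_eq_mul]
    congr 1
    ring
  have orthogonality (p : ι × ι) :
      (∑ a, ψ (a * (f p.1 - f p.2))) * ∑ b, ψ (b * (g p.1 - g p.2)) =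
        if f p.1 = f p.2 ∧ g p.1 = g p.2 then (Fintype.card R : ℂ) ^ 2 else 0 := by
    rw [AddChar.sum_mulShift _ hψ, AddChar.sum_mulShift _ hψ]
    simp only [sub_eq_zero]
    split_ifs <;> simp_all [sq]
  apply Complex.ofReal_injective
  simp_rw [Complex.ofReal_sum, expand, sum_comm (s := univ) (t := (univ : Finset (ι × ι))),
    ← sum_mul_sum, orthogonality]
  rw [← sum_filter, sum_const, nsmul_eq_mul]
  push_cast
  ring

lemma sum_norm_kloostermanSum_pow_four {ψ : AddChar R ℂ} (hψ : ψ.IsPrimitive) :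
    ∑ a, ∑ b, ‖kloostermanSum ψ a b‖ ^ 4 = (Fintype.card R : ℝ) ^ 2 * kloostermanEnergy R := by
  rw [kloostermanEnergy, ← sum_norm_sum_addChar_sq hψ
    (fun p : Rˣ × Rˣ => (↑p.1⁻¹ + ↑p.2⁻¹ : R)) (fun p => (p.1 + p.2 : R))]
  refine sum_congr rfl fun a _ => sum_congr rfl fun b _ => ?_
  rw [← kloostermanSum_sq, norm_pow, ← pow_mul]

omit [Fintype R] [DecidableEq R] in
/-- If `u + v = w + z` and `u⁻¹ + v⁻¹ = w⁻¹ + z⁻¹` then `(u + v) (uv - wz) = 0`, and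
`uv - wz = (u - w) (v - w)`; this is that relation in the variables `u - w`, `v - w`, `w`. -/
lemma two_mul_sub_mul_sub_mul_of_add_eq {u v w z : Rˣ} (hinv : (↑u⁻¹ + ↑v⁻¹ : R) = ↑w⁻¹ + ↑z⁻¹)
    (hadd : (u + v : R) = w + z) :
    2 * (((u : R) - w) * (v - w)) * w = -((u - w) + (v - w)) * ((u - w) * (v - w)) := by
  have huv : (u * v : R) * (↑u⁻¹ + ↑v⁻¹) = u + v := by
    linear_combination (v : R) * u.mul_inv + (u : R) * v.mul_inv
  have hwz : (w * z : R) * (↑w⁻¹ + ↑z⁻¹) = w + z := by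
    linear_combination (z : R) * w.mul_inv + (w : R) * z.mul_inv
  have hprod : (u + v : R) * (w * z) = (u + v) * (u * v) := by
    linear_combination -((w : R) * z) * huv + (u * v : R) * hwz - (u * v : R) * hadd
      + (u * v * w * z : R) * hinv
  have hz : (z : R) = u + v - w := by linear_combination -hadd
  rw [hz] at hprod
  linear_combination -hprod

lemma kloostermanEnergy_le :
    kloostermanEnergy R ≤ annihilatorCard (2 : R) * (∑ c : R, annihilatorCard c) ^ 2 := by
  calc kloostermanEnergy R
      ≤ #{x : R × R × R | 2 * (x.1 * x.2.1) * x.2.2 = -(x.1 + x.2.1) * (x.1 * x.2.1)} := by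
        refine card_le_card_of_injOn
          (fun p => (p.1.1 - p.2.1, p.1.2 - p.2.1, (p.2.1 : R))) (fun p hp => ?_) ?_
        · simp only [coe_filter_univ, Set.mem_ofPred_eq] at hp ⊢
          exact two_mul_sub_mul_sub_mul_of_add_eq hp.1 hp.2
        · rintro ⟨⟨u, v⟩, w, z⟩ hp ⟨⟨u', v'⟩, w', z'⟩ hp' heq
          simp only [coe_filter_univ, Set.mem_ofPred_eq] at hp hp'
          simp only [Prod.mk.injEq] at heq
          obtain ⟨huw, hvw, hw⟩ := heq
          have hu : (u : R) = u' := by linear_combination huw + hw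
          have hv : (v : R) = v' := by linear_combination hvw + hw
          have hz : (z : R) = z' := by linear_combination -hp.2 + hp'.2 + hu + hv - hw
          simp [Units.ext hu, Units.ext hv, Units.ext hw, Units.ext hz]
    _ = ∑ a : R, ∑ b : R, #{z : R | 2 * (a * b) * z = -(a + b) * (a * b)} := by
        simp only [card_filter, Fintype.sum_prod_type]
    _ ≤ ∑ a : R, ∑ b : R, annihilatorCard (2 : R) * (annihilatorCard a * annihilatorCard b) := by
        gcongr with a _ b _
        refine (card_filter_mul_eq_le_annihilatorCard _ _).trans
          ((annihilatorCard_mul_le _ _).trans ?_)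
        gcongr
        exact annihilatorCard_mul_le a b
    _ = annihilatorCard (2 : R) * (∑ c : R, annihilatorCard c) ^ 2 := by
        rw [sq, sum_mul_sum, mul_sum]
        exact sum_congr rfl fun a _ => (mul_sum _ _ _).symm

/-- Kloosterman's argument: `kloostermanSum ψ a b` reappears at every parameter `(a u, b u⁻¹)`, so
the fourth moment over all parameters bounds it. -/
lemma card_units_mul_norm_kloostermanSum_pow_four_le {ψ : AddChar R ℂ} (hψ : ψ.IsPrimitive)
    (a b : R) :
    Fintype.card Rˣ * ‖kloostermanSum ψ a b‖ ^ 4 ≤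
      annihilatorCard a * ((Fintype.card R : ℝ) ^ 2 * kloostermanEnergy R) := by
  have card_fiber_le (a' : R) : #{u : Rˣ | a * u.val = a'} ≤ annihilatorCard a :=
    (card_le_card_of_injOn (fun u : Rˣ => (u : R)) (fun u hu => by simpa using hu)
      Units.val_injective.injOn).trans (card_filter_mul_eq_le_annihilatorCard a a')
  calc Fintype.card Rˣ * ‖kloostermanSum ψ a b‖ ^ 4
      = ∑ u : Rˣ, ‖kloostermanSum ψ (a * u) (b * ↑u⁻¹)‖ ^ 4 := by
        simp [kloostermanSum_mul_unit]
    _ ≤ ∑ u : Rˣ, ∑ b', ‖kloostermanSum ψ (a * u) b'‖ ^ 4 := by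
        gcongr with u
        exact single_le_sum (f := fun b' => ‖kloostermanSum ψ (a * u) b'‖ ^ 4)
          (fun _ _ => by positivity) (mem_univ _)
    _ = ∑ a' : R, ∑ u : Rˣ with a * u.val = a', ∑ b', ‖kloostermanSum ψ (a * u) b'‖ ^ 4 :=
        (sum_fiberwise _ _ _).symm
    _ = ∑ a' : R, (#{u : Rˣ | a * u.val = a'} : ℝ) * ∑ b', ‖kloostermanSum ψ a' b'‖ ^ 4 := by
        refine sum_congr rfl fun a' _ => ?_
        rw [← nsmul_eq_mul, ← sum_const]
        exact sum_congr rfl fun u hu => by rw [(mem_filter.1 hu).2]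
    _ ≤ ∑ a' : R, (annihilatorCard a : ℝ) * ∑ b', ‖kloostermanSum ψ a' b'‖ ^ 4 := by
        gcongr with a'
        exact card_fiber_le a'
    _ = annihilatorCard a * ((Fintype.card R : ℝ) ^ 2 * kloostermanEnergy R) := by
        rw [← mul_sum, sum_norm_kloostermanSum_pow_four hψ]

end KloostermanSum

section DivisorBound

open Finset

lemma exists_succ_pow_le_mul_two_pow (k : ℕ) : ∃ C : ℕ, 0 < C ∧ ∀ e, (e + 1) ^ k ≤ C * 2 ^ e := by
  have hlim : Tendsto (fun e : ℕ => ((e + 1 : ℕ) : ℝ) ^ k / 2 ^ (e + 1)) atTop (𝓝 0) :=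
    (tendsto_add_atTop_iff_nat 1).2 (tendsto_pow_const_div_const_pow_of_one_lt k one_lt_two)
  obtain ⟨B, hB⟩ := hlim.bddAbove_range
  refine ⟨2 * (⌈B⌉₊ + 1), by positivity, fun e => ?_⟩
  have he : ((e + 1 : ℕ) : ℝ) ^ k / 2 ^ (e + 1) ≤ B := hB ⟨e, rfl⟩
  rw [div_le_iff₀ (by positivity)] at he
  have hle : ((e + 1 : ℕ) : ℝ) ^ k ≤ (⌈B⌉₊ + 1) * 2 ^ (e + 1) :=
    he.trans (by gcongr; exact (Nat.le_ceil B).trans (by simp))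
  rw [mul_comm 2, mul_assoc, ← pow_succ']
  exact_mod_cast hle

/-- In `d(n) ^ k = ∏ (eₚ + 1) ^ k`, the primes `p ≥ 2 ^ k` contribute at most `p ^ eₚ` each, and
the finitely many others at most a constant more. -/
lemma exists_card_divisors_pow_le (k : ℕ) : ∃ C : ℕ, ∀ n ≠ 0, #n.divisors ^ k ≤ C * n := by
  obtain ⟨C, hC, hCk⟩ := exists_succ_pow_le_mul_two_pow k
  refine ⟨C ^ 2 ^ k, fun n hn => ?_⟩
  have factor_le (p : ℕ) (hp : p ∈ n.primeFactors) : (n.factorization p + 1) ^ k ≤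
      (if p < 2 ^ k then C else 1) * p ^ n.factorization p := by
    split_ifs with hpk
    · exact (hCk _).trans (by gcongr; exact (Nat.prime_of_mem_primeFactors hp).two_le)
    · calc (n.factorization p + 1) ^ k ≤ (2 ^ n.factorization p) ^ k := by
            gcongr; exact Nat.lt_two_pow_self
        _ = (2 ^ k) ^ n.factorization p := by rw [← pow_mul, ← pow_mul, mul_comm]
        _ ≤ 1 * p ^ n.factorization p := by rw [one_mul]; gcongr; omega
  calc #n.divisors ^ k = ∏ p ∈ n.primeFactors, (n.factorization p + 1) ^ k := by
        rw [Nat.card_divisors hn, prod_pow]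
    _ ≤ ∏ p ∈ n.primeFactors, (if p < 2 ^ k then C else 1) * p ^ n.factorization p :=
        prod_le_prod' factor_le
    _ = C ^ #{p ∈ n.primeFactors | p < 2 ^ k} * n := by
        have factorization : ∏ p ∈ n.primeFactors, p ^ n.factorization p = n :=
          Nat.prod_factorization_pow_eq_self hn
        rw [prod_mul_distrib, factorization, ← prod_filter, prod_const]
    _ ≤ C ^ 2 ^ k * n := by
        gcongr
        exact (card_le_card (t := range (2 ^ k)) fun p hp => by simp_all).trans_eq (card_range _)

lemma le_card_divisors_mul_totient {n : ℕ} (hn : 0 < n) : n ≤ #n.divisors * n.totient := by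
  calc n = ∑ d ∈ n.divisors, d.totient := (Nat.sum_totient n).symm
    _ ≤ #n.divisors • n.totient := sum_le_card_nsmul _ _ _ fun d hd =>
        Nat.le_of_dvd (Nat.totient_pos.2 hn) (Nat.totient_dvd_of_dvd (Nat.dvd_of_mem_divisors hd))

end DivisorBound

section ZModKloosterman

open Finset

variable {q : ℕ} [NeZero q]

lemma annihilatorCard_natCast_le {n : ℕ} (hn : 0 < n) : annihilatorCard (n : ZMod q) ≤ n := by
  simpa [annihilatorCard, nsmul_eq_mul] using IsAddCyclic.card_nsmul_eq_zero_le (α := ZMod q) hn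

lemma annihilatorCard_intCast_le {n : ℤ} (hn : n ≠ 0) :
    annihilatorCard (n : ZMod q) ≤ n.natAbs := by
  have hpos := annihilatorCard_natCast_le (q := q) (Int.natAbs_pos.2 hn)
  obtain ⟨k, rfl | rfl⟩ := n.eq_nat_or_neg <;> simpa [annihilatorCard_neg] using hpos

lemma annihilatorCard_le_gcd (a : ZMod q) : annihilatorCard a ≤ q.gcd a.val := by
  have bezout : ((q.gcd a.val : ℕ) : ZMod q) = a * (q.gcdB a.val : ℤ) := by
    have := congrArg (Int.cast : ℤ → ZMod q) (Nat.gcd_eq_gcd_ab q a.val)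
    simpa using this
  refine (card_le_card fun z hz => ?_).trans
    (annihilatorCard_natCast_le (q := q) (Nat.gcd_pos_of_pos_left a.val (NeZero.pos q)))
  rw [mem_filter_univ] at hz ⊢
  rw [bezout, mul_right_comm, hz, zero_mul]

lemma sum_gcd_range_le (n : ℕ) : ∑ k ∈ range n, n.gcd k ≤ n * #n.divisors := by
  rcases n.eq_zero_or_pos with rfl | hn
  · simp
  calc ∑ k ∈ range n, n.gcd k = ∑ d ∈ n.divisors, ∑ k ∈ range n with n.gcd k = d, n.gcd k :=
        (sum_fiberwise_of_maps_to (fun k _ => by simp [Nat.gcd_dvd_left, hn.ne']) _).symm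
    _ = ∑ d ∈ n.divisors, (n / d).totient * d := sum_congr rfl fun d hd => by
        rw [sum_congr rfl fun k hk => (mem_filter.1 hk).2, sum_const,
          Nat.totient_div_of_dvd (Nat.dvd_of_mem_divisors hd), smul_eq_mul]
    _ ≤ ∑ _d ∈ n.divisors, n := sum_le_sum fun d _ =>
        (Nat.mul_le_mul_right d (Nat.totient_le _)).trans (Nat.div_mul_le_self n d)
    _ = n * #n.divisors := by rw [sum_const, smul_eq_mul, mul_comm]

lemma sum_annihilatorCard_le (q : ℕ) [NeZero q] :
    ∑ a : ZMod q, annihilatorCard a ≤ q * #q.divisors := by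
  calc ∑ a : ZMod q, annihilatorCard a ≤ ∑ a : ZMod q, q.gcd a.val :=
        sum_le_sum fun a _ => annihilatorCard_le_gcd a
    _ = ∑ k ∈ range q, q.gcd k :=
        sum_nbij ZMod.val (fun a _ => mem_range.2 a.val_lt) (ZMod.val_injective q).injOn
          (fun k hk => ⟨k, mem_univ _, ZMod.val_cast_of_lt (by simpa using hk)⟩) fun _ _ => rfl
    _ ≤ q * #q.divisors := sum_gcd_range_le q

/-- The Kloosterman sum of modulus `q`, with respect to the character `x ↦ exp (2 π i x / q)`. -/
noncomputable abbrev kloosterman (q : ℕ) [NeZero q] (a b : ZMod q) : ℂ :=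
  kloostermanSum ZMod.stdAddChar a b

lemma norm_kloosterman_div_pow_four_le (a b : ZMod q) :
    (‖kloosterman q a b‖ / q) ^ 4 ≤ 2 * annihilatorCard a * (#q.divisors : ℝ) ^ 3 / q := by
  have hq : (0 : ℝ) < q := mod_cast NeZero.pos q
  set d := #q.divisors
  set X := ‖kloosterman q a b‖
  have energy_le : (kloostermanEnergy (ZMod q) : ℝ) ≤ 2 * (q * d) ^ 2 := by
    have h2 : annihilatorCard (2 : ZMod q) ≤ 2 := mod_cast annihilatorCard_natCast_le two_pos
    exact_mod_cast kloostermanEnergy_le.trans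
      (Nat.mul_le_mul h2 (Nat.pow_le_pow_left (sum_annihilatorCard_le q) 2))
  have fourth_moment := card_units_mul_norm_kloostermanSum_pow_four_le
    (ZMod.isPrimitive_stdAddChar q) a b
  rw [ZMod.card_units_eq_totient, ZMod.card] at fourth_moment
  rw [div_pow, div_le_div_iff₀ (by positivity) hq]
  calc X ^ 4 * q ≤ X ^ 4 * (d * q.totient) := by
        gcongr; exact mod_cast le_card_divisors_mul_totient (NeZero.pos q)
    _ = d * (q.totient * X ^ 4) := by ring
    _ ≤ d * (annihilatorCard a * ((q : ℝ) ^ 2 * (2 * (q * d) ^ 2))) := by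
        gcongr d * ?_; exact fourth_moment.trans (by gcongr)
    _ = 2 * annihilatorCard a * d ^ 3 * q ^ 4 := by ring

lemma exists_norm_kloosterman_div_pow_eight_le {m n : ℤ} (hmn : m ≠ 0 ∨ n ≠ 0) :
    ∃ C : ℝ, ∀ (q : ℕ) [NeZero q], (‖kloosterman q m n‖ / q) ^ 8 ≤ C / q := by
  wlog hm : m ≠ 0 generalizing m n
  · simpa only [kloosterman, kloostermanSum_comm] using
      this hmn.symm (hmn.resolve_left hm)
  obtain ⟨C, hC⟩ := exists_card_divisors_pow_le 6
  refine ⟨(2 * (m.natAbs : ℝ)) ^ 2 * C, fun q _ => ?_⟩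
  have hq : (0 : ℝ) < q := mod_cast NeZero.pos q
  have hdiv : (#q.divisors : ℝ) ^ 6 ≤ C * q := mod_cast hC q (NeZero.ne q)
  have hann : (annihilatorCard (m : ZMod q) : ℝ) ≤ m.natAbs :=
    mod_cast annihilatorCard_intCast_le hm
  calc (‖kloosterman q m n‖ / q) ^ 8 = ((‖kloosterman q m n‖ / q) ^ 4) ^ 2 := by
        rw [← pow_mul]
    _ ≤ (2 * annihilatorCard (m : ZMod q) * (#q.divisors : ℝ) ^ 3 / q) ^ 2 := by
        gcongr; exact norm_kloosterman_div_pow_four_le _ _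
    _ = (2 * annihilatorCard (m : ZMod q)) ^ 2 * (#q.divisors : ℝ) ^ 6 / q ^ 2 := by ring
    _ ≤ (2 * (m.natAbs : ℝ)) ^ 2 * (C * q) / q ^ 2 := by gcongr
    _ = (2 * (m.natAbs : ℝ)) ^ 2 * C / q := by field_simp

lemma tendsto_norm_kloosterman_div {m n : ℤ} (hmn : m ≠ 0 ∨ n ≠ 0) :
    Tendsto (fun k : ℕ => ‖kloosterman (k + 1) m n‖ / (k + 1 : ℕ)) atTop (𝓝 0) := by
  obtain ⟨C, hC⟩ := exists_norm_kloosterman_div_pow_eight_le hmn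
  have hbound : Tendsto (fun k : ℕ => C / (k + 1 : ℕ)) atTop (𝓝 0) :=
    tendsto_const_nhds.div_atTop
      (tendsto_natCast_atTop_atTop.comp (tendsto_add_atTop_nat 1))
  have hpow : Tendsto (fun k : ℕ => (‖kloosterman (k + 1) m n‖ / (k + 1 : ℕ)) ^ 8) atTop (𝓝 0) :=
    squeeze_zero (fun k => by positivity) (fun k => hC (k + 1)) hbound
  simpa using (hpow.rpow_const (p := 1 / 8) (by norm_num)).congr fun k => by
    rw [← Real.rpow_natCast, ← Real.rpow_mul (by positivity)]; norm_num

end ZModKloosterman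

/-! ### Riemann sums over the half-line -/

section RiemannSum

open Set

variable {E : Type*} [NormedAddCommGroup E]

lemma le_mul_floor_div_add_one {h t : ℝ} (hh : 0 < h) : t ≤ h * (⌊t / h⌋₊ + 1) :=
  (div_le_iff₀' hh).1 (Nat.lt_floor_add_one _).le

lemma norm_comp_floor_div_le {g : ℝ → ℝ} (hg : AntitoneOn g (Ioi 0)) {h : ℝ} (hh : 0 < h)
    {F : ℕ → E} (hF : ∀ k : ℕ, ‖F k‖ ≤ g (h * (k + 1))) :
    ∀ t ∈ Ioi (0 : ℝ), ‖F ⌊t / h⌋₊‖ ≤ g t := fun t ht =>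
  (hF _).trans (hg ht (mem_Ioi.2 <| by positivity) (le_mul_floor_div_add_one hh))

lemma aestronglyMeasurable_comp_floor_div (F : ℕ → E) (h : ℝ) (μ : Measure ℝ) :
    AEStronglyMeasurable (fun t : ℝ => F ⌊t / h⌋₊) μ :=
  (StronglyMeasurable.of_discrete.comp_measurable
    (Nat.measurable_floor.comp (measurable_id.div_const h))).aestronglyMeasurable

lemma integrableOn_comp_floor_div {g : ℝ → ℝ} (hg : AntitoneOn g (Ioi 0))
    (hgi : IntegrableOn g (Ioi 0)) {h : ℝ} (hh : 0 < h) {F : ℕ → E}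
    (hF : ∀ k : ℕ, ‖F k‖ ≤ g (h * (k + 1))) :
    IntegrableOn (fun t : ℝ => F ⌊t / h⌋₊) (Ioi 0) :=
  hgi.mono' (aestronglyMeasurable_comp_floor_div F h _) <|
    (ae_restrict_iff' measurableSet_Ioi).2 <| .of_forall (norm_comp_floor_div_le hg hh hF)

variable [NormedSpace ℝ E]

lemma hasSum_smul_of_integrableOn_comp_floor_div [CompleteSpace E] {h : ℝ} (hh : 0 < h)
    {F : ℕ → E} (hF : IntegrableOn (fun t : ℝ => F ⌊t / h⌋₊) (Ioi 0)) :
    HasSum (fun k => h • F k) (∫ t in Ioi (0 : ℝ), F ⌊t / h⌋₊) := by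
  have mem_iff (t : ℝ) (k : ℕ) : t ∈ Ico (h * k) (h * (k + 1)) ↔ 0 ≤ t ∧ ⌊t / h⌋₊ = k := by
    constructor
    · rintro ⟨hl, hr⟩
      have ht : 0 ≤ t := (by positivity : 0 ≤ h * k).trans hl
      exact ⟨ht, (Nat.floor_eq_iff (div_nonneg ht hh.le)).2
        ⟨(le_div_iff₀' hh).2 hl, (div_lt_iff₀' hh).2 hr⟩⟩
    · rintro ⟨ht, hk⟩
      rw [Nat.floor_eq_iff (div_nonneg ht hh.le)] at hk
      exact ⟨(le_div_iff₀' hh).1 hk.1, (div_lt_iff₀' hh).1 hk.2⟩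
  have hunion : ⋃ k : ℕ, Ico (h * k) (h * (k + 1)) = Ici 0 := by
    ext t
    simp only [mem_iUnion, mem_iff, exists_and_left, exists_eq', and_true, mem_Ici]
  have hdisj : Pairwise (Function.onFun Disjoint fun k : ℕ => Ico (h * k) (h * (k + 1))) :=
    fun j k hjk => Set.disjoint_left.2 fun t hj hk =>
      hjk (((mem_iff t j).1 hj).2.symm.trans ((mem_iff t k).1 hk).2)
  have hsum := hasSum_integral_iUnion (μ := volume) (f := fun t : ℝ => F ⌊t / h⌋₊)
    (fun _ => measurableSet_Ico) hdisj (by rwa [hunion, integrableOn_Ici_iff_integrableOn_Ioi])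
  rw [hunion, integral_Ici_eq_integral_Ioi] at hsum
  convert hsum using 2 with k
  have hconst : ∀ t ∈ Ico (h * k) (h * (k + 1)), F ⌊t / h⌋₊ = F k :=
    fun t ht => by rw [((mem_iff t k).1 ht).2]
  rw [setIntegral_congr_fun measurableSet_Ico hconst, setIntegral_const, Measure.real,
    Real.volume_Ico, ← mul_sub, add_sub_cancel_left, mul_one, ENNReal.toReal_ofReal hh.le]

lemma norm_smul_tsum_le [CompleteSpace E] {g : ℝ → ℝ} (hg : AntitoneOn g (Ioi 0))
    (hgi : IntegrableOn g (Ioi 0)) {h : ℝ} (hh : 0 < h) {F : ℕ → E}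
    (hF : ∀ k : ℕ, ‖F k‖ ≤ g (h * (k + 1))) :
    ‖h • ∑' k, F k‖ ≤ ∫ t in Ioi (0 : ℝ), g t := by
  rw [← tsum_const_smul'', (hasSum_smul_of_integrableOn_comp_floor_div hh
    (integrableOn_comp_floor_div hg hgi hh hF)).tsum_eq]
  exact norm_integral_le_of_norm_le hgi <|
    (ae_restrict_iff' measurableSet_Ioi).2 <| .of_forall (norm_comp_floor_div_le hg hh hF)

lemma tendsto_smul_tsum_integral_Ioi [CompleteSpace E] {g : ℝ → ℝ} (hg : AntitoneOn g (Ioi 0))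
    (hgi : IntegrableOn g (Ioi 0)) {F : ℝ → ℕ → E} {G : ℝ → E}
    (hF : ∀ᶠ h in 𝓝[>] (0 : ℝ), ∀ k : ℕ, ‖F h k‖ ≤ g (h * (k + 1)))
    (hlim : ∀ t, 0 < t → Tendsto (fun h => F h ⌊t / h⌋₊) (𝓝[>] 0) (𝓝 (G t))) :
    Tendsto (fun h => h • ∑' k, F h k) (𝓝[>] (0 : ℝ)) (𝓝 (∫ t in Ioi (0 : ℝ), G t)) := by
  have hconv : Tendsto (fun h => ∫ t in Ioi (0 : ℝ), F h ⌊t / h⌋₊) (𝓝[>] (0 : ℝ))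
      (𝓝 (∫ t in Ioi (0 : ℝ), G t)) := by
    refine tendsto_integral_filter_of_dominated_convergence g
      (.of_forall fun h => aestronglyMeasurable_comp_floor_div (F h) h _) ?_ hgi ?_
    · filter_upwards [hF, self_mem_nhdsWithin] with h hFh hh
      exact (ae_restrict_iff' measurableSet_Ioi).2 <|
        .of_forall (norm_comp_floor_div_le hg hh hFh)
    · exact (ae_restrict_iff' measurableSet_Ioi).2 <| .of_forall hlim
  refine hconv.congr' ?_
  filter_upwards [hF, self_mem_nhdsWithin] with h hFh hh
  rw [← tsum_const_smul'', (hasSum_smul_of_integrableOn_comp_floor_div hh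
    (integrableOn_comp_floor_div hg hgi hh hFh)).tsum_eq]

lemma tendsto_mul_floor_div_add_one {t : ℝ} (ht : 0 < t) :
    Tendsto (fun h : ℝ => h * (⌊t / h⌋₊ + 1)) (𝓝[>] 0) (𝓝 t) := by
  have hid : Tendsto (fun h : ℝ => h) (𝓝[>] 0) (𝓝 0) := tendsto_id.mono_left nhdsWithin_le_nhds
  refine tendsto_of_tendsto_of_tendsto_of_le_of_le' tendsto_const_nhds
    (by simpa using hid.const_add t) ?_ ?_
  · filter_upwards [self_mem_nhdsWithin] with h hh using le_mul_floor_div_add_one hh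
  · filter_upwards [self_mem_nhdsWithin] with h hh
    rw [mul_add_one, add_le_add_iff_right]
    exact (le_div_iff₀' hh).1 (Nat.floor_le (div_nonneg ht.le (le_of_lt hh)))

end RiemannSum

section TotientSum

open ArithmeticFunction Set

lemma totient_eq_sum_divisorsAntidiagonal {n : ℕ} (hn : 0 < n) :
    (n.totient : ℂ) = ∑ x ∈ n.divisorsAntidiagonal, (moebius x.1 : ℂ) * x.2 :=
  ((sum_eq_iff_sum_mul_moebius_eq (f := fun n => (n.totient : ℂ)) (g := fun n => (n : ℂ))).1
    (fun n _ => mod_cast n.sum_totient) n hn).symm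

lemma tsum_moebius_div_sq : ∑' d : ℕ, (moebius d : ℂ) / (d : ℂ) ^ 2 = 6 / (Real.pi : ℂ) ^ 2 := by
  have h2 : (1 : ℝ) < (2 : ℂ).re := by norm_num
  have hinv := LSeries_one_mul_Lseries_moebius h2
  rw [LSeries_one_eq_riemannZeta h2, riemannZeta_two] at hinv
  have hLSeries : ∑' d : ℕ, (moebius d : ℂ) / (d : ℂ) ^ 2 = LSeries (fun n => moebius n) 2 := by
    refine tsum_congr fun d => ?_
    rcases eq_or_ne d 0 with rfl | hd
    · simp
    · rw [LSeries.term_of_ne_zero hd, ← Nat.cast_ofNat (R := ℂ) (n := 2), Complex.cpow_natCast]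
  rw [hLSeries, eq_div_iff (by exact_mod_cast pow_ne_zero 2 Real.pi_ne_zero)]
  linear_combination 6 * hinv

lemma tsum_sum_divisorsAntidiagonal {E : Type*} [NormedAddCommGroup E] [CompleteSpace E]
    {f : ℕ → ℕ → E} (hf : Summable fun x : ℕ+ × ℕ+ => f x.1 x.2) :
    ∑' n : ℕ+, ∑ x ∈ (n : ℕ).divisorsAntidiagonal, f x.1 x.2 = ∑' d : ℕ+, ∑' j : ℕ+, f d j := by
  have hsigma := (sigmaAntidiagonalEquivProd.summable_iff.2 hf).tsum_sigma
  simp only [Function.comp_apply] at hsigma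
  rw [← hf.tsum_prod, ← sigmaAntidiagonalEquivProd.tsum_eq, hsigma]
  refine tsum_congr fun n => ?_
  rw [tsum_fintype, ← Finset.sum_coe_sort]
  rfl

lemma norm_moebius_div_sq_mul_le (d : ℕ) (z : ℂ) :
    ‖(moebius d : ℂ) / (d : ℂ) ^ 2 * z‖ ≤ 1 / (d : ℝ) ^ 2 * ‖z‖ := by
  rw [norm_mul, norm_div, norm_pow, Complex.norm_natCast, Complex.norm_intCast]
  gcongr
  exact_mod_cast abs_moebius_le_one

variable {g : ℝ → ℝ} {c : ℝ → ℂ}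

lemma summable_comp_mul_add_one (hg : AntitoneOn g (Ioi 0)) (hgi : IntegrableOn g (Ioi 0))
    (hg0 : ∀ t, 0 < t → 0 ≤ g t) {h : ℝ} (hh : 0 < h) :
    Summable fun k : ℕ => g (h * (k + 1)) :=
  (summable_mul_left_iff hh.ne').1
    (hasSum_smul_of_integrableOn_comp_floor_div hh <| integrableOn_comp_floor_div hg hgi hh
      fun k => (Real.norm_of_nonneg (hg0 _ (by positivity))).le).summable

lemma tsum_comp_mul_add_one_le (hg : AntitoneOn g (Ioi 0)) (hgi : IntegrableOn g (Ioi 0))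
    (hg0 : ∀ t, 0 < t → 0 ≤ g t) {h : ℝ} (hh : 0 < h) :
    ∑' k : ℕ, g (h * (k + 1)) ≤ (∫ t in Ioi 0, g t) / h := by
  rw [le_div_iff₀' hh]
  exact (le_abs_self _).trans (norm_smul_tsum_le hg hgi hh
    fun k => (Real.norm_of_nonneg (hg0 _ (by positivity))).le)

lemma summable_comp_mul_mul_div (hg : AntitoneOn g (Ioi 0)) (hgi : IntegrableOn g (Ioi 0))
    (hg0 : ∀ t, 0 < t → 0 ≤ g t) {h : ℝ} (hh : 0 < h) :
    Summable fun x : ℕ+ × ℕ+ => g (h * x.1 * x.2) / (h * x.1) := by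
  have hpos (d : ℕ+) : 0 < h * d := mul_pos hh (Nat.cast_pos.2 d.pos)
  have hsum (d : ℕ+) : Summable fun j : ℕ+ => g (h * d * j) / (h * d) := by
    refine Summable.div_const ?_ _
    rw [summable_pnat_iff_summable_succ (f := fun j => g (h * d * j))]
    exact_mod_cast summable_comp_mul_add_one hg hgi hg0 (hpos d)
  have hnonneg (x : ℕ+ × ℕ+) : 0 ≤ g (h * x.1 * x.2) / (h * x.1) :=
    div_nonneg (hg0 _ (mul_pos (hpos _) (Nat.cast_pos.2 x.2.pos))) (hpos _).le
  have hmajorant : Summable fun d : ℕ+ => (∫ t in Ioi 0, g t) / h ^ 2 * (1 / (d : ℝ) ^ 2) :=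
    ((Real.summable_one_div_nat_pow.2 one_lt_two).comp_injective PNat.coe_injective).mul_left _
  refine (summable_prod_of_nonneg hnonneg).2 ⟨hsum, hmajorant.of_nonneg_of_le
    (fun d => tsum_nonneg fun j => hnonneg (d, j)) fun d => ?_⟩
  calc ∑' j : ℕ+, g (h * d * j) / (h * d)
      = (∑' k : ℕ, g (h * d * (k + 1))) / (h * d) := by
        rw [tsum_div_const, tsum_pnat_eq_tsum_succ (f := fun j => g (h * d * j))]
        simp only [Nat.cast_add_one]
    _ ≤ (∫ t in Ioi 0, g t) / (h * d) / (h * d) := by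
        gcongr
        exact tsum_comp_mul_add_one_le hg hgi hg0 (hpos d)
    _ = (∫ t in Ioi 0, g t) / h ^ 2 * (1 / (d : ℝ) ^ 2) := by
        field_simp

lemma summable_moebius_mul_comp_mul (hg : AntitoneOn g (Ioi 0)) (hgi : IntegrableOn g (Ioi 0))
    (hcg : ∀ t, 0 < t → ‖t * c t‖ ≤ g t) {h : ℝ} (hh : 0 < h) :
    Summable fun x : ℕ+ × ℕ+ => (moebius x.1 : ℂ) * x.2 * c (h * (x.1 * x.2 : ℕ)) := by
  refine .of_norm_bounded (summable_comp_mul_mul_div hg hgi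
    (fun t ht => (norm_nonneg _).trans (hcg t ht)) hh) fun ⟨d, j⟩ => ?_
  have hd : 0 < h * d := mul_pos hh (Nat.cast_pos.2 d.pos)
  have hbound := hcg (h * d * j) (mul_pos hd (Nat.cast_pos.2 j.pos))
  have hmoebius : ‖(moebius d : ℂ)‖ ≤ 1 := by
    rw [Complex.norm_intCast]
    exact_mod_cast abs_moebius_le_one
  rw [norm_mul, Complex.norm_real, Real.norm_of_nonneg (by positivity), mul_assoc] at hbound
  rw [le_div_iff₀' hd, norm_mul, norm_mul, Complex.norm_natCast, Nat.cast_mul, ← mul_assoc h]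
  grw [hmoebius, one_mul]
  exact hbound

/-- The Riemann sum of `t c(t)` with mesh `h`, whose limit is `∫ t c(t)`. -/
noncomputable def riemannSum (c : ℝ → ℂ) (h : ℝ) : ℂ :=
  h • ∑' k : ℕ, (h * (k + 1) : ℝ) * c (h * (k + 1))

lemma tsum_totient_mul_eq (a : ℕ → ℂ) :
    ∑' k : ℕ, ((k + 1).totient : ℂ) * a (k + 1) = ∑' n : ℕ+,
      ∑ x ∈ (n : ℕ).divisorsAntidiagonal, (moebius x.1 : ℂ) * x.2 * a (x.1 * x.2) := by
  rw [← tsum_pnat_eq_tsum_succ (f := fun n : ℕ => (n.totient : ℂ) * a n)]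
  refine tsum_congr fun n => ?_
  rw [totient_eq_sum_divisorsAntidiagonal n.pos, Finset.sum_mul]
  exact Finset.sum_congr rfl fun x hx => by rw [(Nat.mem_divisorsAntidiagonal.1 hx).1]

lemma sq_mul_tsum_totient_eq (hg : AntitoneOn g (Ioi 0)) (hgi : IntegrableOn g (Ioi 0))
    (hcg : ∀ t, 0 < t → ‖t * c t‖ ≤ g t) {h : ℝ} (hh : 0 < h) :
    (h : ℂ) ^ 2 * ∑' k : ℕ, ((k + 1).totient : ℂ) * c (h * (k + 1)) =
      ∑' d : ℕ, (moebius d : ℂ) / (d : ℂ) ^ 2 * riemannSum c (h * d) := by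
  have hpnat : ∑' d : ℕ+, (moebius d : ℂ) / (d : ℂ) ^ 2 * riemannSum c (h * d) =
      ∑' d : ℕ, (moebius d : ℂ) / (d : ℂ) ^ 2 * riemannSum c (h * d) := by
    refine PNat.coe_injective.tsum_eq
      (f := fun d : ℕ => (moebius d : ℂ) / (d : ℂ) ^ 2 * riemannSum c (h * d))
      fun d hd => ⟨⟨d, Nat.pos_of_ne_zero ?_⟩, rfl⟩
    rintro rfl
    simp at hd
  have htot := tsum_totient_mul_eq fun n => c (h * n)
  have hinner (d : ℕ+) := tsum_pnat_eq_tsum_succ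
    (f := fun j : ℕ => ((h * d * j : ℝ) : ℂ) * c (h * d * j))
  simp only [Nat.cast_add_one] at htot hinner
  rw [← hpnat, htot, tsum_sum_divisorsAntidiagonal
    (f := fun d j => (moebius d : ℂ) * j * c (h * (d * j : ℕ)))
    (summable_moebius_mul_comp_mul hg hgi hcg hh), ← tsum_mul_left]
  refine tsum_congr fun d => ?_
  have hd : (d : ℂ) ≠ 0 := Nat.cast_ne_zero.2 d.ne_zero
  rw [riemannSum, ← hinner, Complex.real_smul, ← mul_assoc, ← tsum_mul_left, ← tsum_mul_left]
  refine tsum_congr fun j => ?_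
  push_cast
  field_simp

lemma tendsto_sq_mul_tsum_totient (hg : AntitoneOn g (Ioi 0)) (hgi : IntegrableOn g (Ioi 0))
    (hc : ContinuousOn c (Ioi 0)) (hcg : ∀ t, 0 < t → ‖t * c t‖ ≤ g t) :
    Tendsto (fun h : ℝ => (h : ℂ) ^ 2 * ∑' k : ℕ, ((k + 1).totient : ℂ) * c (h * (k + 1)))
      (𝓝[>] 0) (𝓝 (6 / (Real.pi : ℂ) ^ 2 * ∫ t in Ioi (0 : ℝ), t * c t)) := by
  have hbound {h : ℝ} (hh : 0 < h) (k : ℕ) :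
      ‖(h * (k + 1) : ℝ) * c (h * (k + 1))‖ ≤ g (h * (k + 1)) := hcg _ (by positivity)
  have hlim : Tendsto (riemannSum c) (𝓝[>] 0) (𝓝 (∫ t in Ioi (0 : ℝ), t * c t)) := by
    refine tendsto_smul_tsum_integral_Ioi hg hgi
      (eventually_nhdsWithin_of_forall fun h hh => hbound hh) fun t ht => ?_
    have hct : ContinuousAt (fun t : ℝ => t * c t) t :=
      Complex.continuous_ofReal.continuousAt.mul (hc.continuousAt (Ioi_mem_nhds ht))
    exact hct.tendsto.comp (tendsto_mul_floor_div_add_one ht)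
  rw [← tsum_moebius_div_sq, ← tsum_mul_right]
  refine (tendsto_congr' (eventually_nhdsWithin_of_forall fun h hh =>
    sq_mul_tsum_totient_eq hg hgi hcg hh)).2 ?_
  refine tendsto_tsum_of_dominated_convergence
    ((Real.summable_one_div_nat_pow.2 one_lt_two).mul_right (∫ t in Ioi 0, g t)) (fun d => ?_) ?_
  · rcases Nat.eq_zero_or_pos d with rfl | hd
    · simpa using tendsto_const_nhds
    · refine (hlim.comp (tendsto_nhdsWithin_iff.2 ⟨?_, ?_⟩)).const_mul _
      · simpa using (tendsto_id.mul_const (d : ℝ)).mono_left (nhdsWithin_le_nhds (a := (0 : ℝ)))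
      · exact eventually_nhdsWithin_of_forall fun h hh =>
          mem_Ioi.2 (mul_pos hh (Nat.cast_pos.2 hd))
  · filter_upwards [self_mem_nhdsWithin] with h hh d
    rcases Nat.eq_zero_or_pos d with rfl | hd
    · simp
    · have hhd : 0 < h * d := mul_pos hh (Nat.cast_pos.2 hd)
      grw [norm_moebius_div_sq_mul_le, riemannSum, norm_smul_tsum_le hg hgi hhd (hbound hhd)]

end TotientSum

/-! ### Equidistribution of inverses of units modulo `q` -/

lemma tendsto_zero_of_span_topologicalClosure_eq_top {𝕜 V W ι : Type*} [NontriviallyNormedField 𝕜]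
    [SeminormedAddCommGroup V] [NormedSpace 𝕜 V] [SeminormedAddCommGroup W] [NormedSpace 𝕜 W]
    {l : Filter ι} {Λ : ι → V →ₗ[𝕜] W} {C : ℝ} (hΛ : ∀ᶠ i in l, ∀ x, ‖Λ i x‖ ≤ C * ‖x‖)
    {S : Set V} (hS : (Submodule.span 𝕜 S).topologicalClosure = ⊤)
    (hlim : ∀ x ∈ S, Tendsto (fun i => Λ i x) l (𝓝 0)) (x : V) :
    Tendsto (fun i => Λ i x) l (𝓝 0) := by
  have hspan : ∀ y ∈ Submodule.span 𝕜 S, Tendsto (fun i => Λ i y) l (𝓝 0) := by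
    intro y hy
    induction hy using Submodule.span_induction with
    | mem y hy => exact hlim y hy
    | zero => simpa only [map_zero] using tendsto_const_nhds
    | add y z _ _ hy hz => simpa only [map_add, add_zero] using hy.add hz
    | smul c y _ hy => simpa only [map_smul, smul_zero] using hy.const_smul c
  rw [Metric.tendsto_nhds]
  intro ε hε
  have hC : 0 < |C| + 1 := by positivity
  have hx : x ∈ closure (Submodule.span 𝕜 S : Set V) := by
    rw [← Submodule.topologicalClosure_coe, hS]
    trivial
  obtain ⟨y, hy, hxy⟩ := Metric.mem_closure_iff.1 hx (ε / 2 / (|C| + 1)) (by positivity)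
  rw [dist_eq_norm, lt_div_iff₀' hC] at hxy
  filter_upwards [hΛ, Metric.tendsto_nhds.1 (hspan y hy) (ε / 2) (half_pos hε)] with i hi hyi
  rw [dist_zero_right] at hyi ⊢
  calc ‖Λ i x‖ = ‖Λ i (x - y) + Λ i y‖ := by rw [← map_add, sub_add_cancel]
    _ ≤ ‖Λ i (x - y)‖ + ‖Λ i y‖ := norm_add_le _ _
    _ ≤ (|C| + 1) * ‖x - y‖ + ‖Λ i y‖ := by
      grw [hi (x - y)]
      gcongr
      linarith [le_abs_self C]
    _ < ε / 2 + ε / 2 := add_lt_add hxy hyi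
    _ = ε := add_halves ε

section InverseUnits

open Finset ZMod

lemma fourier_toAddCircle {q : ℕ} [NeZero q] (n : ℤ) (v : ZMod q) :
    fourier n (toAddCircle v) = stdAddChar ((n : ZMod q) * v) := by
  rw [fourier_apply, stdAddChar_apply, ← map_zsmul, zsmul_eq_mul]
  rfl

lemma integral_fourier_of_ne_zero {n : ℤ} (hn : n ≠ 0) : ∫ θ : UnitAddCircle, fourier n θ = 0 :=
  integral_eq_zero_of_add_right_eq_neg (fourier_add_half_inv_index hn one_pos)

/-- The functional `g ↦ q⁻¹ (∑ e(m v / q) g(v⁻¹ / q) - [m = 0] φ(q) ∫ g)`, the sum being over the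
units `v` modulo `q`; it measures the deviation from equidistribution of the points `v⁻¹ / q`. -/
noncomputable def discrepancy (q : ℕ) [NeZero q] (m : ℤ) : C(UnitAddCircle, ℂ) →ₗ[ℂ] ℂ where
  toFun g := (∑ v : (ZMod q)ˣ, stdAddChar ((m : ZMod q) * v.val) * g (toAddCircle (v⁻¹).val) -
    if m = 0 then q.totient * ∫ θ, g θ else 0) / q
  map_add' f g := by
    have hint := integral_add (f.continuous.integrable_of_hasCompactSupport
      (HasCompactSupport.of_compactSpace f)) (g.continuous.integrable_of_hasCompactSupport
      (HasCompactSupport.of_compactSpace g)) (μ := volume)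
    simp only [ContinuousMap.add_apply, mul_add, sum_add_distrib, hint]
    split_ifs <;> ring
  map_smul' c g := by
    simp only [ContinuousMap.smul_apply, smul_eq_mul, integral_const_mul, RingHom.id_apply,
      mul_left_comm _ c, ← mul_sum]
    split_ifs <;> ring

lemma norm_discrepancy_le (q : ℕ) [NeZero q] (m : ℤ) (g : C(UnitAddCircle, ℂ)) :
    ‖discrepancy q m g‖ ≤ 2 * ‖g‖ := by
  have hsum : ‖∑ v : (ZMod q)ˣ, stdAddChar ((m : ZMod q) * v.val) * g (toAddCircle (v⁻¹).val)‖
      ≤ q.totient * ‖g‖ := by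
    calc _ ≤ ∑ _v : (ZMod q)ˣ, ‖g‖ := norm_sum_le_of_le _ fun v _ => by
          rw [norm_mul, stdAddChar_apply, Circle.norm_coe, one_mul]
          exact g.norm_coe_le_norm _
      _ = q.totient * ‖g‖ := by
          rw [sum_const, card_univ, card_units_eq_totient, nsmul_eq_mul]
  have hint : ‖∫ θ, g θ‖ ≤ ‖g‖ := by
    simpa [Measure.real] using
      norm_integral_le_of_norm_le_const (μ := volume) (.of_forall g.norm_coe_le_norm)
  have hmean : ‖if m = 0 then (q.totient : ℂ) * ∫ θ, g θ else 0‖ ≤ q.totient * ‖g‖ := by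
    split_ifs
    · rw [norm_mul, Complex.norm_natCast]
      gcongr
    · rw [norm_zero]
      positivity
  have hq : (0 : ℝ) < q := mod_cast NeZero.pos q
  rw [discrepancy, LinearMap.coe_mk, AddHom.coe_mk, norm_div, Complex.norm_natCast, div_le_iff₀ hq]
  calc _ ≤ q.totient * ‖g‖ + q.totient * ‖g‖ := (norm_sub_le _ _).trans (add_le_add hsum hmean)
    _ ≤ q * ‖g‖ + q * ‖g‖ := by gcongr <;> exact q.totient_le
    _ = 2 * ‖g‖ * q := by ring

lemma discrepancy_fourier (q : ℕ) [NeZero q] (m n : ℤ) :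
    discrepancy q m (fourier n) = if m = 0 ∧ n = 0 then 0 else kloosterman q m n / q := by
  have hsum : ∑ v : (ZMod q)ˣ, stdAddChar ((m : ZMod q) * v.val) *
      fourier n (toAddCircle (v⁻¹).val) = kloosterman q m n := by
    rw [kloosterman, kloostermanSum_comm]
    refine sum_congr rfl fun v _ => ?_
    rw [fourier_toAddCircle, ← AddChar.map_add_eq_mul, add_comm]
  simp only [discrepancy, LinearMap.coe_mk, AddHom.coe_mk, hsum]
  rcases eq_or_ne m 0 with rfl | hm <;> rcases eq_or_ne n 0 with rfl | hn
  · simp [kloostermanSum, card_units_eq_totient, Measure.real]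
  · rw [integral_fourier_of_ne_zero hn]
    simp [hn]
  · simp [hm]
  · simp [hm]

lemma tendsto_discrepancy (m : ℤ) (g : C(UnitAddCircle, ℂ)) :
    Tendsto (fun k : ℕ => discrepancy (k + 1) m g) atTop (𝓝 0) := by
  refine tendsto_zero_of_span_topologicalClosure_eq_top
    (.of_forall fun k => norm_discrepancy_le (k + 1) m) span_fourier_closure_eq_top ?_ g
  rintro - ⟨n, rfl⟩
  simp only [discrepancy_fourier]
  split_ifs with hmn
  · exact tendsto_const_nhds
  · refine tendsto_zero_iff_norm_tendsto_zero.2 ?_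
    simpa only [norm_div, Complex.norm_natCast] using
      tendsto_norm_kloosterman_div (not_and_or.1 hmn)

lemma tendsto_discrepancy_of_tendsto (m : ℤ) {ι : Type*} {l : Filter ι} {k : ι → ℕ}
    (hk : Tendsto k l atTop) {g : ι → C(UnitAddCircle, ℂ)} {g₀ : C(UnitAddCircle, ℂ)}
    (hg : Tendsto g l (𝓝 g₀)) :
    Tendsto (fun i => discrepancy (k i + 1) m (g i)) l (𝓝 0) := by
  have hdiff : Tendsto (fun i => discrepancy (k i + 1) m (g i - g₀)) l (𝓝 0) := by
    refine squeeze_zero_norm (fun i => norm_discrepancy_le _ m _) ?_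
    simpa using (tendsto_iff_norm_sub_tendsto_zero.1 hg).const_mul 2
  simpa only [map_sub, Function.comp_def, sub_add_cancel, add_zero] using
    hdiff.add ((tendsto_discrepancy m g₀).comp hk)

end InverseUnits

/-! ### The level sets of the smallest denominator -/

section SmallestDenominator

open Set

/-- Some fraction with denominator `q`, not necessarily in lowest terms, lies in the open interval
of length `δ` centred at `x`. -/
def HasFractionNear (x δ : ℝ) (q : ℕ) : Prop := 0 < q ∧ ∃ p : ℤ, |x - p / q| < δ / 2

variable {x δ : ℝ} {q : ℕ}

lemma qmin_eq_sInf (x δ : ℝ) : qmin x δ = sInf {q | HasFractionNear x δ q} := by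
  simp only [qmin, HasFractionNear, abs_lt, neg_lt_sub_iff_lt_add, sub_lt_comm, and_comm,
    sub_lt_iff_lt_add, add_comm]

lemma hasFractionNear_of_one_div_lt (x : ℝ) (hq : 0 < q) (hδ : 1 / (q : ℝ) < δ) :
    HasFractionNear x δ q := by
  have hqR : (0 : ℝ) < q := mod_cast hq
  refine ⟨hq, round (x * q), ?_⟩
  have hround := abs_sub_round (x * q)
  rw [div_lt_iff₀ hqR] at hδ
  rw [sub_div' hqR.ne', abs_div, abs_of_pos hqR, div_lt_iff₀ hqR]
  linarith

lemma hasFractionNear_qmin (hδ : 0 < δ) (x : ℝ) : HasFractionNear x δ (qmin x δ) := by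
  obtain ⟨n, hn⟩ := exists_nat_one_div_lt hδ
  rw [qmin_eq_sInf]
  exact Nat.sInf_mem (s := {q | HasFractionNear x δ q})
    ⟨_, hasFractionNear_of_one_div_lt x n.succ_pos (mod_cast hn)⟩

lemma qmin_pos (hδ : 0 < δ) (x : ℝ) : 0 < qmin x δ := (hasFractionNear_qmin hδ x).1

lemma HasFractionNear.qmin_le (h : HasFractionNear x δ q) : qmin x δ ≤ q := by
  rw [qmin_eq_sInf]
  exact Nat.sInf_le h

lemma qmin_eq_iff (hδ : 0 < δ) :
    qmin x δ = q ↔ HasFractionNear x δ q ∧ ∀ s < q, ¬HasFractionNear x δ s := by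
  constructor
  · rintro rfl
    exact ⟨hasFractionNear_qmin hδ x, fun s hs h => hs.not_ge h.qmin_le⟩
  · rintro ⟨hq, hmin⟩
    exact hq.qmin_le.eq_of_not_lt fun hlt => hmin _ hlt (hasFractionNear_qmin hδ x)

lemma hasFractionNear_add_one : HasFractionNear (x + 1) δ q ↔ HasFractionNear x δ q := by
  refine and_congr_right fun hq => (Equiv.subRight (q : ℤ)).exists_congr fun p => ?_
  have hqR : (q : ℝ) ≠ 0 := mod_cast hq.ne'
  have hshift : x + 1 - p / q = x - (p - q) / q := by
    rw [sub_div, div_self hqR]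
    ring
  simp [hshift]

lemma periodic_qmin (δ : ℝ) : Function.Periodic (qmin · δ) 1 := fun x => by
  simp only [qmin_eq_sInf, hasFractionNear_add_one]

lemma measurable_qmin (hδ : 0 < δ) : Measurable (qmin · δ) := by
  have hnear (s : ℕ) : MeasurableSet {x | HasFractionNear x δ s} := by
    simp only [HasFractionNear, measurableSet_setOfPred]
    fun_prop
  refine measurable_to_countable' fun q => ?_
  have hlevel : (qmin · δ) ⁻¹' {q} =
      {x | HasFractionNear x δ q} ∩ ⋂ s ∈ Iio q, {x | HasFractionNear x δ s}ᶜ := by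
    ext x
    simp [qmin_eq_iff hδ]
  rw [hlevel]
  exact (hnear q).inter (.biInter (to_countable _) fun s _ => (hnear s).compl)

lemma div_le_div_of_det_eq_one {p r b u s : ℤ} (hdet : p * b - q * r = 1) (hb : 0 < b) (hs : 0 < s)
    (hsq : s < q) (hlt : (u / s : ℝ) < p / q) : (u / s : ℝ) ≤ r / b := by
  have hq : 0 < (q : ℝ) := mod_cast hs.trans hsq
  have hsR : (0 : ℝ) < s := mod_cast hs
  have hbR : (0 : ℝ) < b := mod_cast hb
  rw [div_lt_div_iff₀ hsR hq] at hlt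
  rw [div_le_div_iff₀ hsR hbR]
  norm_cast at hlt ⊢
  have hexpand : q * (r * s - u * b) = b * (p * s - u * q) - s := by
    linear_combination (-s) * hdet
  have hgap : b ≤ b * (p * s - u * q) := le_mul_of_one_le_right hb.le (by lia)
  by_contra! hcon
  nlinarith

lemma one_div_eq_sub_of_det_eq_one {p r b : ℤ} (hdet : p * b - q * r = 1) (hb : 0 < b)
    (hq : 0 < q) : 1 / (q * b : ℝ) = p / q - r / b := by
  have hq : (0 : ℝ) < q := mod_cast hq
  have hb : (0 : ℝ) < b := mod_cast hb
  have hdet : (p * b - q * r : ℝ) = 1 := mod_cast hdet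
  rw [div_sub_div _ _ hq.ne' hb.ne', hdet]

/-- The determinant condition makes `r / b < p / q < (p - r) / (q - b)` the Farey neighbours of
`p / q` among the fractions with denominator less than `q`. -/
lemma farey_neighbours_of_det_eq_one {p r b u s : ℤ} (hb : 0 < b) (hbq : b < q)
    (hdet : p * b - q * r = 1) (hs : 0 < s) (hsq : s < q) :
    (u / s : ℝ) ≤ r / b ∨ ((p - r : ℤ) / (q - b : ℤ) : ℝ) ≤ u / s := by
  have hdet' : -p * (q - b) - q * -(p - r) = 1 := by linear_combination hdet
  rcases lt_trichotomy (u / s : ℝ) (p / q) with hlt | heq | hgt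
  · exact .inl (div_le_div_of_det_eq_one hdet hb hs hsq hlt)
  · have hq : (0 : ℝ) < q := mod_cast hs.trans hsq
    rw [div_eq_div_iff (mod_cast hs.ne') hq.ne'] at heq
    norm_cast at heq
    exact absurd (Int.le_of_dvd hs ⟨u * b - r * s, by
      linear_combination (-s) * hdet - b * heq⟩) hsq.not_ge
  · have hle := div_le_div_of_det_eq_one hdet' (sub_pos.2 hbq) hs hsq (u := -u)
      (by simpa only [Int.cast_neg, neg_div, neg_lt_neg_iff] using hgt)
    exact .inr (by simpa only [Int.cast_neg, neg_div, neg_le_neg_iff] using hle)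

lemma qmin_eq_iff_mem_Icc {p r b : ℤ} (hδ : 0 < δ) (hb : 0 < b) (hbq : b < q)
    (hdet : p * b - q * r = 1) (hx : |x - p / q| < δ / 2) :
    qmin x δ = q ↔ x ∈ Icc (r / b + δ / 2 : ℝ) ((p - r : ℤ) / (q - b : ℤ) - δ / 2) := by
  have hq : 0 < q := by lia
  have hdet' : -p * (q - b) - q * -(p - r) = 1 := by linear_combination hdet
  have hleft := one_div_eq_sub_of_det_eq_one hdet hb hq
  have hright := one_div_eq_sub_of_det_eq_one hdet' (sub_pos.2 hbq) hq
  have hleft_pos : 0 < 1 / (q * b : ℝ) := by positivity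
  have hright_pos : 0 < 1 / (q * (q - b : ℤ) : ℝ) := by
    have := sub_pos.2 hbq
    positivity
  have hx' := abs_lt.1 hx
  simp only [Int.cast_neg, neg_div] at hright
  rw [qmin_eq_iff hδ]
  constructor
  · rintro ⟨-, hmin⟩
    constructor
    · by_contra! hlt
      lift b to ℕ using hb.le
      refine hmin b (mod_cast hbq) ⟨mod_cast hb, r, abs_lt.2 ?_⟩
      simp only [Int.cast_natCast] at *
      constructor <;> linarith
    · by_contra! hlt
      obtain ⟨c, hc⟩ := Int.eq_ofNat_of_zero_le (sub_pos.2 hbq).le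
      refine hmin c (by lia) ⟨by lia, p - r, abs_lt.2 ?_⟩
      rw [hc] at hlt hright hright_pos
      simp only [Int.cast_natCast] at *
      constructor <;> linarith
  · rintro ⟨hxl, hxr⟩
    refine ⟨⟨hq, p, hx⟩, ?_⟩
    rintro s hsq ⟨hs, u, hu⟩
    have hu' := abs_lt.1 hu
    have hneighbours := farey_neighbours_of_det_eq_one (u := u) (s := s) hb hbq hdet (mod_cast hs)
      (mod_cast hsq)
    simp only [Int.cast_natCast] at hneighbours
    rcases hneighbours with hle | hge <;> linarith

lemma exists_det_eq_one (hq : 1 < q) {p : ℤ} (v : (ZMod q)ˣ) (hv : (p : ZMod q) = v) :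
    0 < (v⁻¹).val.val ∧ (v⁻¹).val.val < q ∧ ∃ r : ℤ, p * (v⁻¹).val.val - q * r = 1 := by
  have : NeZero q := ⟨by lia⟩
  have : Fact (1 < q) := ⟨hq⟩
  refine ⟨Nat.pos_of_ne_zero fun h => v⁻¹.ne_zero ((ZMod.val_eq_zero _).1 h), ZMod.val_lt _, ?_⟩
  have hmod : ((1 : ℤ) : ZMod q) = (p * (v⁻¹).val.val : ℤ) := by
    push_cast
    rw [hv, ZMod.natCast_zmod_val, Units.mul_inv]
  obtain ⟨r, hr⟩ := (ZMod.intCast_eq_intCast_iff_dvd_sub _ _ q).1 hmod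
  exact ⟨r, by linarith⟩

lemma coprime_of_qmin_eq {p : ℤ} (hδ : 0 < δ) (hx : |x - p / q| < δ / 2) (hq : qmin x δ = q) :
    IsCoprime p q := by
  have hq0 : 0 < q := hq ▸ qmin_pos hδ x
  rw [Int.isCoprime_iff_gcd_eq_one]
  obtain ⟨q', hq'⟩ : p.gcd q ∣ q := mod_cast p.gcd_dvd_right q
  obtain ⟨p', hp'⟩ := p.gcd_dvd_left q
  set g := p.gcd q
  have hg : g ≠ 0 := by
    rintro hg
    simp_all
  have hq'0 : 0 < q' := Nat.pos_of_ne_zero fun h => by simp_all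
  have hnear : HasFractionNear x δ q' := by
    refine ⟨hq'0, p', ?_⟩
    rw [hq', hp'] at hx
    push_cast at hx
    rwa [mul_div_mul_left _ _ (mod_cast hg)] at hx
  have hle : g * q' ≤ 1 * q' := by
    rw [← hq', one_mul, ← hq]
    exact hnear.qmin_le
  exact le_antisymm (Nat.le_of_mul_le_mul_right hle hq'0) (Nat.one_le_iff_ne_zero.2 hg)

lemma abs_sub_div_lt_of_qmin_eq {p : ℤ} (hδ : 0 < δ) (hδ1 : δ < 1) (hx : |x - p / q| < δ / 2)
    (hq : qmin x δ = q) : |x - p / q| < 1 / q / 2 := by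
  have hq0 : 0 < q := hq ▸ qmin_pos hδ x
  have hqR : (0 : ℝ) < q := mod_cast hq0
  obtain rfl | hq1 : q = 1 ∨ 1 < q := by lia
  · simpa using hx.trans (by linarith)
  have hcoprime := coprime_of_qmin_eq hδ hx hq
  obtain ⟨hb, hbq, r, hdet⟩ := exists_det_eq_one hq1 (ZMod.unitOfIsCoprime p hcoprime) rfl
  set b := (ZMod.unitOfIsCoprime p hcoprime)⁻¹.val.val
  have hbR : (1 : ℝ) ≤ b := mod_cast hb
  have hcR : (1 : ℝ) ≤ (q - b : ℤ) := mod_cast Int.sub_pos_of_lt (Nat.cast_lt.2 hbq)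
  obtain ⟨hxl, hxr⟩ :=
    (qmin_eq_iff_mem_Icc hδ (mod_cast hb) (mod_cast hbq) hdet hx).1 hq
  have hleft := one_div_eq_sub_of_det_eq_one hdet (mod_cast hb) hq0
  have hright := one_div_eq_sub_of_det_eq_one (p := -p) (b := q - b) (r := -(p - r))
    (by linear_combination hdet) (by lia) hq0
  have hleft_le : 1 / (q * (b : ℤ) : ℝ) ≤ 1 / q :=
    one_div_le_one_div_of_le hqR (le_mul_of_one_le_right hqR.le (mod_cast hbR))
  have hright_le : 1 / (q * (q - b : ℤ) : ℝ) ≤ 1 / q :=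
    one_div_le_one_div_of_le hqR (le_mul_of_one_le_right hqR.le hcR)
  simp only [Int.cast_neg, neg_div] at hright
  have hx' := abs_lt.1 hx
  rw [abs_lt]
  constructor <;> linarith

/-- The length of `fareyPiece δ q v`, divided by `δ`, in terms of `t = √δ q` and of the position
`a = v⁻¹ / q`. -/
noncomputable def pieceLength (t a : ℝ) : ℝ :=
  max 0 (1 / max 1 (t ^ 2 * a) + 1 / max 1 (t ^ 2 * (1 - a)) - 1)

lemma pieceLength_one_sub (t a : ℝ) : pieceLength t (1 - a) = pieceLength t a := by
  rw [pieceLength, pieceLength, sub_sub_cancel, add_comm (1 / max 1 (t ^ 2 * (1 - a)))]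

lemma pieceLength_norm_coe (t : ℝ) {a : ℝ} (ha : a ∈ Ico 0 1) :
    pieceLength t ‖(a : UnitAddCircle)‖ = pieceLength t a := by
  rw [UnitAddCircle.norm_eq, abs_sub_round_eq_min, Int.fract_eq_self.2 ha]
  rcases min_choice a (1 - a) with h | h <;> rw [h]
  exact pieceLength_one_sub t a

/-- The part of the level set `{x | qmin x δ = q}` close to `v / q`. -/
def fareyPiece (δ : ℝ) (q : ℕ) (v : (ZMod q)ˣ) : Set ℝ :=
  {x | |x - v.val.val / q| < δ / 2 ∧ qmin x δ = q}

lemma measurableSet_fareyPiece (hδ : 0 < δ) (v : (ZMod q)ˣ) :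
    MeasurableSet (fareyPiece δ q v) :=
  (measurableSet_lt (f := fun x : ℝ => |x - v.val.val / q|) (by fun_prop) measurable_const).inter
    (measurable_qmin hδ (measurableSet_singleton q))

lemma volume_real_abs_sub_lt_inter_Icc (c d l u : ℝ) :
    volume.real {x | |x - c| < d / 2 ∧ x ∈ Icc (l + d / 2) (u - d / 2)} =
      max 0 (min d (c - l) + min d (u - c) - d) := by
  have hset : {x | |x - c| < d / 2 ∧ x ∈ Icc (l + d / 2) (u - d / 2)} =
      Ioo (c - d / 2) (c + d / 2) ∩ Icc (l + d / 2) (u - d / 2) := by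
    rw [← Real.ball_eq_Ioo]
    rfl
  have hl : max (c - d / 2) (l + d / 2) = c + d / 2 - min d (c - l) := by
    rw [← max_sub_sub_left]
    congr 1 <;> ring
  have hu : min (c + d / 2) (u - d / 2) = min d (u - c) + (c - d / 2) := by
    rw [← min_add_add_right]
    congr 1 <;> ring
  have hae : (Ioo (c - d / 2) (c + d / 2) ∩ Icc (l + d / 2) (u - d / 2) : Set ℝ) =ᵐ[volume]
      (Icc (c - d / 2) (c + d / 2) ∩ Icc (l + d / 2) (u - d / 2) : Set ℝ) :=
    ae_eq_set_inter Ioo_ae_eq_Icc (ae_eq_refl _)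
  rw [hset, measureReal_congr hae, Icc_inter_Icc,
    Real.volume_real_Icc, max_comm, hl, hu]
  congr 1
  ring

lemma mul_one_div_max_one {z : ℝ} (hδ : 0 < δ) (hz : 0 < z) :
    δ * (1 / max 1 (δ * z)) = min δ (1 / z) := by
  rcases le_total (δ * z) 1 with h | h
  · rw [max_eq_left h, min_eq_left ((le_div_iff₀ hz).2 h), div_one, mul_one]
  · rw [max_eq_right h, min_eq_right ((div_le_iff₀ hz).2 h)]
    field_simp

lemma volume_real_fareyPiece [NeZero q] (hδ : 0 < δ) (hδ1 : δ < 1) (v : (ZMod q)ˣ) :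
    volume.real (fareyPiece δ q v) =
      δ * pieceLength (√δ * q) ‖ZMod.toAddCircle (v⁻¹).val‖ := by
  have hq : 0 < q := NeZero.pos q
  have hqR : (0 : ℝ) < q := mod_cast hq
  have hb : ((v⁻¹).val.val / q : ℝ) ∈ Ico 0 1 :=
    ⟨by positivity, (div_lt_one hqR).2 (mod_cast ZMod.val_lt _)⟩
  rw [ZMod.toAddCircle_apply, pieceLength_norm_coe _ hb]
  obtain rfl | hq1 : q = 1 ∨ 1 < q := by lia
  · have hpiece : fareyPiece δ 1 v = Metric.ball 0 (δ / 2) := by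
      ext x
      have hnear (hx : |x| < δ / 2) : HasFractionNear x δ 1 := ⟨one_pos, 0, by simpa using hx⟩
      have hqmin (hx : |x| < δ / 2) : qmin x δ = 1 := (hnear hx).qmin_le.antisymm (qmin_pos hδ x)
      simpa [fareyPiece, Subsingleton.elim v.val 0] using hqmin
    rw [hpiece, Real.volume_real_ball (half_pos hδ).le]
    simp [pieceLength, Subsingleton.elim v⁻¹.val 0, hδ.le, hδ1.le, mul_div_cancel₀]
  · obtain ⟨hb0, hbq, r, hdet⟩ := exists_det_eq_one hq1 (p := v.val.val) v (by simp)
    set b := v⁻¹.val.val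
    have hbR : (0 : ℝ) < b := mod_cast hb0
    have hcR : (0 : ℝ) < q - b := sub_pos.2 (mod_cast hbq)
    have hpiece : fareyPiece δ q v = {x : ℝ | |x - v.val.val / q| < δ / 2 ∧
        x ∈ Icc (r / b + δ / 2 : ℝ) ((v.val.val - r) / (q - b) - δ / 2)} := by
      ext x
      refine and_congr_right fun hx => ?_
      simpa using qmin_eq_iff_mem_Icc hδ (mod_cast hb0) (mod_cast hbq) hdet (by simpa using hx)
    have hleft : (v.val.val / q - r / b : ℝ) = 1 / (q * b) := by
      simpa using (one_div_eq_sub_of_det_eq_one hdet (mod_cast hb0) hq).symm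
    have hright : ((v.val.val - r) / (q - b) - v.val.val / q : ℝ) = 1 / (q * (q - b)) := by
      have := one_div_eq_sub_of_det_eq_one (p := -v.val.val) (b := q - b) (r := -(v.val.val - r))
        (by linear_combination hdet) (by lia) hq
      push_cast at this
      rw [this]
      ring
    have hscale_left : (√δ * q) ^ 2 * (b / q) = δ * (q * b) := by
      rw [mul_pow, Real.sq_sqrt hδ.le]
      field_simp
    have hscale_right : (√δ * q) ^ 2 * (1 - b / q) = δ * (q * (q - b)) := by
      rw [mul_pow, Real.sq_sqrt hδ.le]
      field_simp
    rw [hpiece, volume_real_abs_sub_lt_inter_Icc, hleft, hright, pieceLength, hscale_left,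
      hscale_right, mul_max_of_nonneg _ _ hδ.le, mul_sub_one, mul_add, mul_zero,
      mul_one_div_max_one hδ (mul_pos hqR hbR), mul_one_div_max_one hδ (mul_pos hqR hcR)]

lemma abs_sub_div_lt_of_mem_fareyPiece (hδ : 0 < δ) (hδ1 : δ < 1) {v : (ZMod q)ˣ}
    (hx : x ∈ fareyPiece δ q v) : |x - v.val.val / q| < 1 / q / 2 := by
  simpa only [Int.cast_natCast] using abs_sub_div_lt_of_qmin_eq (p := v.val.val) hδ hδ1
    (by simpa only [Int.cast_natCast] using hx.1) hx.2

lemma iUnion_fareyPiece (hδ : 0 < δ) (hδ1 : δ < 1) (hq : 0 < q) :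
    ⋃ v, fareyPiece δ q v = Ico (-(1 / q / 2) : ℝ) (-(1 / q / 2) + 1) ∩ {x | qmin x δ = q} := by
  have : NeZero q := ⟨hq.ne'⟩
  have hqR : (0 : ℝ) < q := mod_cast hq
  ext x
  simp only [mem_inter_iff, mem_Ico, mem_ofPred_eq, mem_iUnion]
  constructor
  · rintro ⟨v, hv⟩
    have hn := abs_lt.1 (abs_sub_div_lt_of_mem_fareyPiece hδ hδ1 hv)
    have h0 : (0 : ℝ) ≤ v.val.val / q := by positivity
    have h1 : (v.val.val / q + 1 / q : ℝ) ≤ 1 := by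
      rw [← add_div, div_le_one hqR]
      exact mod_cast ZMod.val_lt v.val
    exact ⟨⟨by linarith, by linarith⟩, hv.2⟩
  · rintro ⟨⟨hxl, hxr⟩, hxq⟩
    obtain ⟨-, p, hp⟩ := hasFractionNear_qmin hδ x
    rw [hxq] at hp
    have hn := abs_lt.1 (abs_sub_div_lt_of_qmin_eq hδ hδ1 hp hxq)
    have hp0 : -1 < p := by
      have : (-1 / q : ℝ) < p / q := by
        rw [neg_div]
        linarith
      exact mod_cast (div_lt_div_iff_of_pos_right hqR).1 this
    have hpq : p < q := by
      have : (p / q : ℝ) < 1 := by linarith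
      exact mod_cast (div_lt_one hqR).1 this
    lift p to ℕ using by lia
    have hcoprime := Nat.isCoprime_iff_coprime.1 (coprime_of_qmin_eq hδ hp hxq)
    refine ⟨ZMod.unitOfCoprime p hcoprime, ?_, hxq⟩
    rw [ZMod.coe_unitOfCoprime, ZMod.val_cast_of_lt (mod_cast hpq)]
    simpa only [Int.cast_natCast] using hp

lemma pairwise_disjoint_fareyPiece (hδ : 0 < δ) (hδ1 : δ < 1) (hq : 0 < q) :
    Pairwise (Function.onFun Disjoint (fareyPiece δ q)) := by
  have : NeZero q := ⟨hq.ne'⟩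
  have hqR : (0 : ℝ) < q := mod_cast hq
  have hle {v w : (ZMod q)ˣ} {x : ℝ} (hv : x ∈ fareyPiece δ q v) (hw : x ∈ fareyPiece δ q w) :
      v.val.val ≤ w.val.val := by
    have hv' := abs_lt.1 (abs_sub_div_lt_of_mem_fareyPiece hδ hδ1 hv)
    have hw' := abs_lt.1 (abs_sub_div_lt_of_mem_fareyPiece hδ hδ1 hw)
    have hlt : (v.val.val / q : ℝ) < (w.val.val + 1) / q := by
      rw [add_div]
      linarith
    exact Nat.lt_succ_iff.1 (mod_cast (div_lt_div_iff_of_pos_right hqR).1 hlt)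
  refine fun v w hvw => disjoint_left.2 fun x hv hw => hvw ?_
  exact Units.ext (ZMod.val_injective q ((hle hv hw).antisymm (hle hw hv)))

lemma setIntegral_qmin_eq {w : ℝ → ℂ} (hδ : 0 < δ) (hδ1 : δ < 1) (hq : 0 < q)
    [Fintype (ZMod q)ˣ] (hw : LocallyIntegrable w) (hper : Function.Periodic w 1) :
    ∫ x in Ioc 0 1 ∩ {x | qmin x δ = q}, w x = ∑ v, ∫ x in fareyPiece δ q v, w x := by
  have hlevel : MeasurableSet {x | qmin x δ = q} := measurable_qmin hδ (measurableSet_singleton q)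
  have hper_ind : Function.Periodic ({x | qmin x δ = q}.indicator w) 1 := fun x => by
    simp only [indicator_apply, mem_ofPred_eq, hper x, periodic_qmin δ x]
  have hshift := hper_ind.intervalIntegral_add_eq 0 (-(1 / q / 2))
  rw [zero_add, intervalIntegral.integral_of_le zero_le_one,
    intervalIntegral.integral_of_le (by linarith), ← integral_Ico_eq_integral_Ioc (y := _ + 1),
    setIntegral_indicator hlevel, setIntegral_indicator hlevel,
    ← iUnion_fareyPiece hδ hδ1 hq] at hshift
  rw [hshift, integral_iUnion_fintype (measurableSet_fareyPiece hδ)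
    (pairwise_disjoint_fareyPiece hδ hδ1 hq) fun v => ?_]
  refine (hw.integrableOn_isCompact (isCompact_closedBall (v.val.val / q : ℝ) (δ / 2))).mono_set ?_
  exact fun x hx => hx.1.le

lemma exists_forall_norm_comp_qmin_le {E : Type*} [SeminormedAddGroup E] (hδ : 0 < δ) (G : ℕ → E) :
    ∃ C, ∀ x, ‖G (qmin x δ)‖ ≤ C := by
  obtain ⟨N, hN⟩ := exists_nat_one_div_lt hδ
  refine ⟨∑ k ∈ Finset.range (N + 2), ‖G k‖, fun x => ?_⟩
  have hle := (hasFractionNear_of_one_div_lt x N.succ_pos (mod_cast hN)).qmin_le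
  exact Finset.single_le_sum (f := fun k => ‖G k‖) (fun k _ => norm_nonneg _)
    (Finset.mem_range.2 (by lia))

lemma hasSum_integral_mul_comp_qmin {w : ℝ → ℂ} (hδ : 0 < δ) (hδ1 : δ < 1)
    (hw : LocallyIntegrable w) (hper : Function.Periodic w 1) (G : ℕ → ℂ) :
    HasSum (fun k : ℕ => (∑ v, ∫ x in fareyPiece δ (k + 1) v, w x) * G (k + 1))
      (∫ x in Ioc 0 1, w x * G (qmin x δ)) := by
  obtain ⟨C, hC⟩ := exists_forall_norm_comp_qmin_le hδ G
  have hlevel (q : ℕ) : MeasurableSet {x | qmin x δ = q} :=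
    measurable_qmin hδ (measurableSet_singleton q)
  have hint : IntegrableOn (fun x => w x * G (qmin x δ)) (Ioc 0 1) :=
    ((hw.integrableOn_isCompact isCompact_Icc).mono_set Ioc_subset_Icc_self).mul_bdd
      ((measurable_of_countable G).comp (measurable_qmin hδ)).aestronglyMeasurable
      (.of_forall hC)
  have hunion : ⋃ k : ℕ, Ioc (0 : ℝ) 1 ∩ {x | qmin x δ = k + 1} = Ioc 0 1 := by
    rw [← inter_iUnion, inter_eq_left]
    exact fun x _ => mem_iUnion.2 ⟨qmin x δ - 1, (Nat.sub_add_cancel (qmin_pos hδ x)).symm⟩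
  have hsum := hasSum_integral_iUnion (μ := volume) (f := fun x => w x * G (qmin x δ))
    (fun k : ℕ => measurableSet_Ioc.inter (hlevel (k + 1)))
    (fun j k hjk => disjoint_left.2 fun x hj hk => hjk (by
      simpa using hj.2.symm.trans hk.2))
    (by rwa [hunion])
  rw [hunion] at hsum
  convert! hsum using 2 with k
  rw [← setIntegral_qmin_eq hδ hδ1 k.succ_pos hw hper, ← integral_mul_const]
  exact setIntegral_congr_fun (measurableSet_Ioc.inter (hlevel (k + 1))) fun x hx => by
    rw [show qmin x δ = k + 1 from hx.2]

end SmallestDenominator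

/-! ### Bounds for the lengths of the pieces -/

section PieceLength

open Set

lemma pieceLength_nonneg (t a : ℝ) : 0 ≤ pieceLength t a := le_max_left _ _

lemma one_div_max_one_le_one (x : ℝ) : 1 / max 1 x ≤ 1 :=
  div_le_one_of_le₀ (le_max_left 1 x) (by positivity)

lemma one_div_max_one_mul_le {s y z : ℝ} (hs : 0 < s) (hy : 0 < y) (hyz : y ≤ z) :
    1 / max 1 (s * z) ≤ 1 / (s * y) :=
  one_div_le_one_div_of_le (mul_pos hs hy) (by grw [hyz]; exact le_max_right 1 (s * z))

lemma pieceLength_le_one (t a : ℝ) : pieceLength t a ≤ 1 :=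
  max_le zero_le_one
    (by linarith [one_div_max_one_le_one (t ^ 2 * a), one_div_max_one_le_one (t ^ 2 * (1 - a))])

variable {t : ℝ}

lemma pieceLength_le_indicator (ht : 0 < t) {a : ℝ} (ha : a ≤ 1 / 2) :
    pieceLength t a ≤ (Iic (2 / t ^ 2)).indicator (fun _ => 2 / t ^ 2) a := by
  have ht2 : 0 < t ^ 2 := by positivity
  have hfar : 1 / max 1 (t ^ 2 * (1 - a)) ≤ 2 / t ^ 2 := by
    convert one_div_max_one_mul_le ht2 one_half_pos (by linarith : 1 / 2 ≤ 1 - a) using 1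
    field_simp
  rw [indicator_apply]
  split_ifs with hmem
  · exact max_le (by positivity) (by linarith [one_div_max_one_le_one (t ^ 2 * a)])
  · rw [mem_Iic, not_le] at hmem
    have hhalf {y : ℝ} (hy : 2 / t ^ 2 ≤ y) : 1 / max 1 (t ^ 2 * y) ≤ 1 / 2 := by
      convert one_div_max_one_mul_le ht2 (by positivity) hy using 2
      field_simp
    exact max_le le_rfl (by linarith [hhalf hmem.le, hhalf (by linarith : 2 / t ^ 2 ≤ 1 - a)])

lemma norm_le_half (θ : UnitAddCircle) : ‖θ‖ ≤ 1 / 2 := by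
  simpa using AddCircle.norm_le_half_period 1 one_ne_zero (x := θ)

open Finset in
lemma card_units_norm_toAddCircle_inv_le {q : ℕ} (hq : 1 < q) [NeZero q] {r : ℝ} (hr : 0 ≤ r) :
    (#{v : (ZMod q)ˣ | ‖ZMod.toAddCircle v⁻¹.val‖ ≤ r} : ℝ) ≤ 2 * (r * q) := by
  have : Fact (1 < q) := ⟨hq⟩
  have hqR : (0 : ℝ) < q := mod_cast NeZero.pos q
  have hnorm (j : ZMod q) : ‖ZMod.toAddCircle j‖ = |(j.valMinAbs : ℝ)| / q := by
    have hmem : |j.valMinAbs * 2| ≤ q :=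
      abs_le.2 ⟨j.valMinAbs_mem_Ioc.1.le, j.valMinAbs_mem_Ioc.2⟩
    have hmem : |(j.valMinAbs : ℝ)| * 2 ≤ q := by
      rw [← abs_two, ← abs_mul]
      exact mod_cast hmem
    conv_lhs => rw [← j.coe_valMinAbs, ZMod.toAddCircle_intCast]
    rw [(AddCircle.norm_coe_eq_abs_iff 1 one_ne_zero).2, abs_div, Nat.abs_cast]
    rw [abs_div, Nat.abs_cast, abs_one, div_le_div_iff₀ hqR two_pos]
    linarith
  have hcard : #{v : (ZMod q)ˣ | ‖ZMod.toAddCircle v⁻¹.val‖ ≤ r} ≤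
      #((Finset.Icc (-(⌊r * q⌋₊ : ℤ)) ⌊r * q⌋₊).erase 0) := by
    refine card_le_card_of_injOn (fun v => v⁻¹.val.valMinAbs) (fun v hv => ?_) fun v _ w _ hvw =>
      inv_injective (Units.ext (ZMod.injective_valMinAbs hvw))
    simp only [coe_filter, Finset.mem_univ, true_and, mem_ofPred_eq, hnorm, div_le_iff₀ hqR] at hv
    have hfloor := Nat.le_floor (n := v⁻¹.val.valMinAbs.natAbs) (a := r * q) (by simpa using hv)
    simp only [coe_erase, coe_Icc, Set.mem_sdiff, Set.mem_Icc, mem_singleton_iff,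
      ZMod.valMinAbs_eq_zero, v⁻¹.ne_zero, not_false_eq_true, and_true]
    lia
  calc (#{v : (ZMod q)ˣ | ‖ZMod.toAddCircle v⁻¹.val‖ ≤ r} : ℝ) ≤ (2 * ⌊r * q⌋₊ : ℕ) := by
        refine mod_cast hcard.trans (le_of_eq ?_)
        rw [card_erase_of_mem (by simp), Int.card_Icc]
        lia
    _ ≤ 2 * (r * q) := by
        push_cast
        grw [Nat.floor_le (by positivity)]

lemma sum_pieceLength_div_le_one (q : ℕ) [NeZero q] (t : ℝ) :
    (∑ v : (ZMod q)ˣ, pieceLength t ‖ZMod.toAddCircle v⁻¹.val‖) / q ≤ 1 := by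
  refine div_le_one_of_le₀ ?_ (Nat.cast_nonneg _)
  calc _ ≤ ∑ _v : (ZMod q)ˣ, (1 : ℝ) := Finset.sum_le_sum fun v _ => pieceLength_le_one _ _
    _ = q.totient := by
      rw [Finset.sum_const, Finset.card_univ, ZMod.card_units_eq_totient, nsmul_one]
    _ ≤ q := mod_cast q.totient_le

lemma sum_pieceLength_div_le {q : ℕ} (hq : 1 < q) [NeZero q] (ht : 0 < t) :
    (∑ v : (ZMod q)ˣ, pieceLength t ‖ZMod.toAddCircle v⁻¹.val‖) / q ≤ 8 / t ^ 4 := by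
  have hqR : (0 : ℝ) < q := mod_cast NeZero.pos q
  rw [div_le_iff₀ hqR]
  calc _ ≤ ∑ v : (ZMod q)ˣ, if ‖ZMod.toAddCircle v⁻¹.val‖ ≤ 2 / t ^ 2 then 2 / t ^ 2 else 0 :=
        Finset.sum_le_sum fun v _ => by
          simpa [indicator_apply] using pieceLength_le_indicator ht (norm_le_half _)
    _ ≤ 2 * (2 / t ^ 2 * q) * (2 / t ^ 2) := by
        rw [← Finset.sum_filter, Finset.sum_const, nsmul_eq_mul]
        grw [card_units_norm_toAddCircle_inv_le hq (by positivity)]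
    _ = 8 / t ^ 4 * q := by ring

lemma continuous_uncurry_pieceLength : Continuous (Function.uncurry pieceLength) := by
  have hmax (x : ℝ) : max 1 x ≠ 0 := (lt_max_of_lt_left one_pos).ne'
  unfold Function.uncurry pieceLength
  exact continuous_const.max (((continuous_const.div (by fun_prop) fun _ => hmax _).add
    (continuous_const.div (by fun_prop) fun _ => hmax _)).sub continuous_const)

/-- The function `θ ↦ pieceLength t ‖θ‖` on the circle, depending continuously on `t`. -/
noncomputable def pieceLengthMap : C(ℝ, C(UnitAddCircle, ℂ)) :=
  ContinuousMap.curry ⟨fun p => (pieceLength p.1 ‖p.2‖ : ℂ),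
    Complex.continuous_ofReal.comp (continuous_uncurry_pieceLength.comp
      (continuous_fst.prodMk (continuous_norm.comp continuous_snd)))⟩

lemma pieceLengthMap_apply (t : ℝ) (θ : UnitAddCircle) :
    pieceLengthMap t θ = pieceLength t ‖θ‖ := rfl

/-- The average over the circle of `pieceLength t`. -/
noncomputable def meanPieceLength (t : ℝ) : ℝ := ∫ θ : UnitAddCircle, pieceLength t ‖θ‖

lemma integral_pieceLengthMap (t : ℝ) : ∫ θ, pieceLengthMap t θ = meanPieceLength t :=
  integral_ofReal

lemma continuous_meanPieceLength : Continuous meanPieceLength := by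
  refine continuous_of_dominated (bound := fun _ => 1) (fun t => ?_)
    (fun t => .of_forall fun θ => ?_) (integrable_const 1) (.of_forall fun θ => ?_)
  · exact (continuous_uncurry_pieceLength.comp
      (continuous_const.prodMk continuous_norm)).aestronglyMeasurable
  · simpa [abs_of_nonneg (pieceLength_nonneg _ _)] using pieceLength_le_one _ _
  · exact continuous_uncurry_pieceLength.comp (continuous_id.prodMk continuous_const)

lemma meanPieceLength_nonneg (t : ℝ) : 0 ≤ meanPieceLength t :=
  integral_nonneg fun _ => pieceLength_nonneg _ _

lemma meanPieceLength_le_one (t : ℝ) : meanPieceLength t ≤ 1 := by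
  calc meanPieceLength t ≤ ∫ _θ : UnitAddCircle, (1 : ℝ) :=
        integral_mono_of_nonneg (.of_forall fun _ => pieceLength_nonneg _ _) (integrable_const 1)
          (.of_forall fun _ => pieceLength_le_one _ _)
    _ = 1 := by simp [Measure.real]

lemma meanPieceLength_le (ht : 0 < t) : meanPieceLength t ≤ 8 / t ^ 4 := by
  calc meanPieceLength t
      ≤ ∫ θ, (Metric.closedBall (0 : UnitAddCircle) (2 / t ^ 2)).indicator (fun _ => 2 / t ^ 2) θ :=
        integral_mono_of_nonneg (.of_forall fun _ => pieceLength_nonneg _ _)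
          ((integrable_const _).indicator measurableSet_closedBall) (.of_forall fun θ => by
            classical
            simpa only [indicator_apply, mem_closedBall_zero_iff, mem_Iic] using
              pieceLength_le_indicator ht (norm_le_half θ))
    _ = volume.real (Metric.closedBall (0 : UnitAddCircle) (2 / t ^ 2)) * (2 / t ^ 2) := by
        rw [integral_indicator_const _ measurableSet_closedBall, smul_eq_mul]
    _ ≤ 2 * (2 / t ^ 2) * (2 / t ^ 2) := by
        gcongr
        rw [Measure.real, AddCircle.volume_closedBall, ENNReal.toReal_ofReal (by positivity)]
        exact min_le_right _ _
    _ = 8 / t ^ 4 := by ring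

/-- A decreasing integrable majorant of `|log t| ^ n * t * A t`, where `A t` is any average of
`pieceLength t`. -/
noncomputable def envelope (n : ℕ) (t : ℝ) : ℝ := 16 * n.factorial * (1 + t ^ 2)⁻¹

lemma antitoneOn_envelope (n : ℕ) : AntitoneOn (envelope n) (Ioi 0) := by
  intro s hs t _ hst
  have hs : 0 ≤ s := (mem_Ioi.1 hs).le
  unfold envelope
  gcongr

lemma integrableOn_envelope (n : ℕ) : IntegrableOn (envelope n) (Ioi 0) :=
  (integrable_inv_one_add_sq.const_mul _).integrableOn

lemma abs_log_pow_mul_mul_le_envelope (n : ℕ) (ht : 0 < t) {A : ℝ} (hA0 : 0 ≤ A) (hA1 : A ≤ 1)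
    (hA : 1 < t → A ≤ 8 / t ^ 4) : |Real.log t| ^ n * (t * A) ≤ envelope n t := by
  have hlog : |Real.log t| ^ n ≤ n.factorial * Real.exp |Real.log t| := by
    rw [← div_le_iff₀' (by positivity)]
    exact Real.pow_div_factorial_le_exp _ (abs_nonneg _) n
  grw [hlog, envelope]
  rcases le_or_gt t 1 with h1 | h1
  · rw [abs_of_nonpos (Real.log_nonpos ht.le h1), Real.exp_neg, Real.exp_log ht]
    calc n.factorial * t⁻¹ * (t * A) ≤ n.factorial * t⁻¹ * (t * 1) := by gcongr
      _ = 16 * n.factorial * 16⁻¹ := by field_simp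
      _ ≤ 16 * n.factorial * (1 + t ^ 2)⁻¹ := by
        gcongr
        nlinarith
  · rw [abs_of_nonneg (Real.log_nonneg h1.le), Real.exp_log ht]
    calc n.factorial * t * (t * A) ≤ n.factorial * t * (t * (8 / t ^ 4)) := by gcongr; exact hA h1
      _ = 16 * n.factorial * (2 * t ^ 2)⁻¹ := by field_simp; norm_num
      _ ≤ 16 * n.factorial * (1 + t ^ 2)⁻¹ := by
        gcongr
        nlinarith

lemma abs_log_pow_mul_meanPieceLength_le (n : ℕ) (ht : 0 < t) :
    |Real.log t| ^ n * (t * meanPieceLength t) ≤ envelope n t :=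
  abs_log_pow_mul_mul_le_envelope n ht (meanPieceLength_nonneg t) (meanPieceLength_le_one t)
    fun _ => meanPieceLength_le ht

lemma abs_log_pow_mul_sum_pieceLength_le (n q : ℕ) [NeZero q] {h : ℝ} (hh : 0 < h) (hh1 : h < 1) :
    |Real.log (h * q)| ^ n * (h * q *
      ((∑ v : (ZMod q)ˣ, pieceLength (h * q) ‖ZMod.toAddCircle v⁻¹.val‖) / q)) ≤
      envelope n (h * q) := by
  have ht : 0 < h * q := mul_pos hh (mod_cast NeZero.pos q)
  refine abs_log_pow_mul_mul_le_envelope n ht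
    (div_nonneg (Finset.sum_nonneg fun _ _ => pieceLength_nonneg _ _) (Nat.cast_nonneg q))
    (sum_pieceLength_div_le_one q _) fun ht1 => sum_pieceLength_div_le ?_ ht
  by_contra! hq
  have : (q : ℝ) ≤ 1 := mod_cast hq
  nlinarith

end PieceLength

/-! ### The limiting density -/

section LimitingDensity

open Set

lemma meanPieceLength_eq_intervalIntegral (t : ℝ) :
    meanPieceLength t = ∫ a in 0..1, pieceLength t a := by
  rw [meanPieceLength, ← UnitAddCircle.intervalIntegral_preimage 0, zero_add]
  exact intervalIntegral.integral_congr_Ioo_of_le zero_le_one fun a ha =>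
    pieceLength_norm_coe t ⟨ha.1.le, ha.2⟩

lemma continuous_one_div_max_one (c : ℝ) : Continuous fun a : ℝ => 1 / max 1 (c * a) :=
  continuous_const.div (by fun_prop) fun _ => (lt_max_of_lt_left one_pos).ne'

lemma one_div_mul_add_one_div_mul_sub_one {c a : ℝ} (hc : 0 < c) (ha : a ∈ Ioo 0 1) :
    1 / (c * a) + 1 / (c * (1 - a)) - 1 = (1 - c * (a * (1 - a))) / (c * (a * (1 - a))) := by
  have ha0 := ha.1.ne'
  have ha1 := (sub_pos.2 ha.2).ne'
  field_simp
  ring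

lemma one_div_max_one_add_sub_one_nonneg {c a : ℝ} (ha : a ∈ Icc 0 1) (hc : c * (a * (1 - a)) ≤ 1) :
    0 ≤ 1 / max 1 (c * a) + 1 / max 1 (c * (1 - a)) - 1 := by
  have hpos (x : ℝ) : 0 < 1 / max 1 x := one_div_pos.2 (lt_max_of_lt_left one_pos)
  rcases le_total (c * a) 1 with h | h
  · rw [max_eq_left h]
    linarith [hpos (c * (1 - a))]
  rcases le_total (c * (1 - a)) 1 with h' | h'
  · rw [max_eq_left h']
    linarith [hpos (c * a)]
  have hc0 : 0 < c := pos_of_mul_pos_left (one_pos.trans_le h) ha.1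
  have ha0 : 0 < a := pos_of_mul_pos_right (one_pos.trans_le h) hc0.le
  have ha1 : 0 < 1 - a := pos_of_mul_pos_right (one_pos.trans_le h') hc0.le
  rw [max_eq_right h, max_eq_right h',
    one_div_mul_add_one_div_mul_sub_one hc0 ⟨ha0, sub_pos.1 ha1⟩]
  exact div_nonneg (sub_nonneg.2 hc) (by positivity)

lemma pieceLength_eq_zero {t a : ℝ} (ha : a ∈ Ioo 0 1) (ht : 1 ≤ t ^ 2 * (a * (1 - a))) :
    pieceLength t a = 0 := by
  have ht0 : 0 < t ^ 2 := (sq_nonneg t).lt_of_ne' fun h => by norm_num [h] at ht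
  have h : 1 ≤ t ^ 2 * a := ht.trans (by gcongr; nlinarith [ha.1, ha.2])
  have h' : 1 ≤ t ^ 2 * (1 - a) := ht.trans (by gcongr; nlinarith [ha.1, ha.2])
  rw [pieceLength, max_eq_right h, max_eq_right h', one_div_mul_add_one_div_mul_sub_one ht0 ha]
  exact max_eq_left (div_nonpos_of_nonpos_of_nonneg (sub_nonpos.2 ht) (zero_le_one.trans ht))

lemma integral_one_div_max_one {c x : ℝ} (hc : 0 < c) (hx : 1 ≤ c * x) :
    ∫ a in 0..x, 1 / max 1 (c * a) = (1 + Real.log (c * x)) / c := by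
  have hx0 : 0 < x := pos_of_mul_pos_right (one_pos.trans_le hx) hc.le
  have hcx : 1 / c ≤ x := (div_le_iff₀' hc).2 hx
  have hint (b d : ℝ) := (continuous_one_div_max_one c).intervalIntegrable (μ := volume) b d
  have hflat : ∫ a in 0..1 / c, 1 / max 1 (c * a) = ∫ _ in 0..1 / c, (1 : ℝ) :=
    intervalIntegral.integral_congr_Ioo_of_le (by positivity) fun a ha => by
      simp only [max_eq_left ((le_div_iff₀' hc).1 ha.2.le), div_one]
  have hdecay : ∫ a in 1 / c..x, 1 / max 1 (c * a) = ∫ a in 1 / c..x, 1 / c * (1 / a) :=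
    intervalIntegral.integral_congr_Ioo_of_le hcx fun a ha => by
      simp only [max_eq_right ((div_le_iff₀' hc).1 ha.1.le), one_div_mul_one_div]
  rw [← intervalIntegral.integral_add_adjacent_intervals (hint 0 (1 / c)) (hint (1 / c) x), hflat,
    hdecay, intervalIntegral.integral_const_mul, integral_one_div_of_pos (by positivity) hx0,
    div_div_eq_mul_div, div_one, mul_comm x, intervalIntegral.integral_const, smul_eq_mul]
  ring

lemma integral_one_div_max_one_tail {c x : ℝ} (hc : 1 ≤ c) (hx : 1 ≤ c * x) :
    ∫ a in x..1, 1 / max 1 (c * a) = -Real.log x / c := by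
  have hint (b : ℝ) := (continuous_one_div_max_one c).intervalIntegrable (μ := volume) 0 b
  have hc0 : 0 < c := one_pos.trans_le hc
  have hx0 : 0 < x := pos_of_mul_pos_right (one_pos.trans_le hx) hc0.le
  rw [← intervalIntegral.integral_interval_sub_left (hint 1) (hint x),
    integral_one_div_max_one hc0 (by rwa [mul_one]), integral_one_div_max_one hc0 hx,
    Real.log_mul hc0.ne' hx0.ne', mul_one]
  ring

lemma integral_pieceLength_eq {t x : ℝ} (hx : x ∈ Icc 0 1)
    (hraw : ∀ a ∈ Ioo 0 x, t ^ 2 * (a * (1 - a)) ≤ 1) :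
    ∫ a in 0..x, pieceLength t a = (∫ a in 0..x, 1 / max 1 (t ^ 2 * a)) +
      (∫ a in 1 - x..1, 1 / max 1 (t ^ 2 * a)) - x := by
  have hcont := continuous_one_div_max_one (t ^ 2)
  have hcont' : Continuous fun a : ℝ => 1 / max 1 (t ^ 2 * (1 - a)) :=
    hcont.comp (continuous_const.sub continuous_id)
  calc ∫ a in 0..x, pieceLength t a
      = ∫ a in 0..x, (1 / max 1 (t ^ 2 * a) + 1 / max 1 (t ^ 2 * (1 - a)) - 1) :=
        intervalIntegral.integral_congr_Ioo_of_le hx.1 fun a ha =>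
          max_eq_right (one_div_max_one_add_sub_one_nonneg
            ⟨ha.1.le, ha.2.le.trans hx.2⟩ (hraw a ha))
    _ = _ := by
        rw [intervalIntegral.integral_sub
            (f := fun a => 1 / max 1 (t ^ 2 * a) + 1 / max 1 (t ^ 2 * (1 - a)))
            ((hcont.add hcont').intervalIntegrable _ _)
            intervalIntegrable_const,
          intervalIntegral.integral_add (hcont.intervalIntegrable _ _)
            (hcont'.intervalIntegrable _ _),
          intervalIntegral.integral_comp_sub_left (fun a => 1 / max 1 (t ^ 2 * a)) 1]
        simp

lemma meanPieceLength_of_sq_le_one {t : ℝ} (ht : t ^ 2 ≤ 1) : meanPieceLength t = 1 := by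
  rw [meanPieceLength_eq_intervalIntegral]
  calc ∫ a in 0..1, pieceLength t a = ∫ _ in (0 : ℝ)..1, (1 : ℝ) :=
        intervalIntegral.integral_congr_Ioo_of_le zero_le_one fun a ⟨ha0, ha1⟩ => by
          have h : t ^ 2 * a ≤ 1 := mul_le_one₀ ht ha0.le ha1.le
          have h' : t ^ 2 * (1 - a) ≤ 1 := mul_le_one₀ ht (by linarith) (by linarith)
          norm_num [pieceLength, max_eq_left h, max_eq_left h']
    _ = 1 := by simp

lemma meanPieceLength_of_sq_le_four {t : ℝ} (ht1 : 1 ≤ t ^ 2) (ht4 : t ^ 2 ≤ 4) :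
    meanPieceLength t = 2 * (1 + Real.log (t ^ 2)) / t ^ 2 - 1 := by
  have hraw : ∀ a ∈ Ioo (0 : ℝ) 1, t ^ 2 * (a * (1 - a)) ≤ 1 := fun a _ => by
    nlinarith [mul_nonneg (sub_nonneg.2 ht4) (sq_nonneg (a - 1 / 2)), sq_nonneg (a - 1 / 2)]
  rw [meanPieceLength_eq_intervalIntegral,
    integral_pieceLength_eq (right_mem_Icc.2 zero_le_one) hraw, sub_self,
    integral_one_div_max_one (by linarith) (by linarith), mul_one]
  ring

lemma meanPieceLength_eq_two_mul (t : ℝ) :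
    meanPieceLength t = 2 * ∫ a in 0..1 / 2, pieceLength t a := by
  have hcont : Continuous (pieceLength t) :=
    continuous_uncurry_pieceLength.comp (continuous_const.prodMk continuous_id)
  have hsymm : ∫ a in 1 / 2..1, pieceLength t a = ∫ a in 0..1 / 2, pieceLength t a := by
    have h := intervalIntegral.integral_comp_sub_left (a := 1 / 2) (b := 1) (pieceLength t) 1
    simp only [pieceLength_one_sub] at h
    norm_num at h ⊢
    exact h
  rw [meanPieceLength_eq_intervalIntegral, two_mul,
    ← intervalIntegral.integral_add_adjacent_intervals (hcont.intervalIntegrable 0 (1 / 2))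
      (hcont.intervalIntegrable (1 / 2) 1), hsymm]

/-- If `4 ≤ t ^ 2`, then `pieceLength t` vanishes on `[1 / 2 - r, 1 / 2 + r]`,
where `1 / 2 ± r` are the roots of `t ^ 2 * (a * (1 - a)) = 1`. -/
lemma meanPieceLength_of_four_le_sq {t r : ℝ} (ht : 4 ≤ t ^ 2) (hr : 0 ≤ r)
    (hr2 : r ^ 2 = 1 / 4 - 1 / t ^ 2) :
    meanPieceLength t = 2 * (1 - 2 * Real.log (1 / 2 + r)) / t ^ 2 - 1 + 2 * r := by
  have ht0 : 0 < t ^ 2 := by linarith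
  have hfactor (a : ℝ) :
      t ^ 2 * (a * (1 - a)) = 1 - t ^ 2 * ((1 / 2 - r - a) * (1 / 2 + r - a)) := by
    linear_combination -t ^ 2 * hr2 + mul_one_div_cancel ht0.ne'
  have hroots : t ^ 2 * (1 / 2 - r) * (1 / 2 + r) = 1 := by
    linear_combination hfactor (1 / 2 + r)
  have hr1 : 0 < 1 / 2 - r := by
    have : 0 < 1 / t ^ 2 := by positivity
    nlinarith
  have hlog : Real.log (t ^ 2 * (1 / 2 - r)) = -Real.log (1 / 2 + r) := by
    rw [← Real.log_inv, eq_inv_of_mul_eq_one_left hroots]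
  have hcont : Continuous (pieceLength t) :=
    continuous_uncurry_pieceLength.comp (continuous_const.prodMk continuous_id)
  have hbelow : ∀ a ∈ Ioo 0 (1 / 2 - r), t ^ 2 * (a * (1 - a)) ≤ 1 := fun a ⟨_, ha⟩ => by
    rw [hfactor, sub_le_self_iff]
    exact mul_nonneg ht0.le (mul_nonneg (by linarith) (by linarith))
  have habove : ∀ a ∈ Ioo (1 / 2 - r) (1 / 2), 1 ≤ t ^ 2 * (a * (1 - a)) := fun a ⟨ha, _⟩ => by
    rw [hfactor, le_sub_self_iff]
    exact mul_nonpos_of_nonneg_of_nonpos ht0.le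
      (mul_nonpos_of_nonpos_of_nonneg (by linarith) (by linarith))
  have hzero : ∫ a in 1 / 2 - r..1 / 2, pieceLength t a = 0 := by
    rw [intervalIntegral.integral_congr_Ioo_of_le (g := fun _ => 0) (by linarith) fun a ha =>
      pieceLength_eq_zero ⟨by linarith [ha.1], by linarith [ha.2]⟩ (habove a ha),
      intervalIntegral.integral_zero]
  rw [meanPieceLength_eq_two_mul, ← intervalIntegral.integral_add_adjacent_intervals
    (hcont.intervalIntegrable 0 (1 / 2 - r)) (hcont.intervalIntegrable (1 / 2 - r) (1 / 2)), hzero,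
    integral_pieceLength_eq ⟨hr1.le, by linarith⟩ hbelow,
    integral_one_div_max_one ht0 (by nlinarith), show 1 - (1 / 2 - r) = 1 / 2 + r by ring,
    integral_one_div_max_one_tail (by linarith) (by nlinarith), hlog]
  ring

lemma etaLog_eq (s : ℝ) :
    etaLog s = 6 / Real.pi ^ 2 * (Real.exp s ^ 2 * meanPieceLength (Real.exp s)) := by
  have hsq : Real.exp s ^ 2 = Real.exp (2 * s) := by rw [← Real.exp_nat_mul, Nat.cast_two]
  have hlog4 : Real.log 4 = 2 * Real.log 2 := by
    rw [show (4 : ℝ) = 2 ^ 2 by norm_num, Real.log_pow, Nat.cast_two]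
  unfold etaLog
  split_ifs with h1 h2
  · rw [meanPieceLength_of_sq_le_one (hsq.trans_le (Real.exp_le_one_iff.2 (by linarith))), hsq,
      mul_one]
  · have hle_one : 1 ≤ Real.exp s ^ 2 := hsq ▸ Real.one_le_exp (by linarith)
    have hle_four : Real.exp s ^ 2 ≤ 4 := by
      rw [hsq, ← Real.le_log_iff_exp_le four_pos]
      linarith
    rw [meanPieceLength_of_sq_le_four hle_one hle_four, hsq, Real.log_exp]
    field_simp
    ring
  · have hfour_le : 4 ≤ Real.exp s ^ 2 := by
      rw [hsq, ← Real.log_le_iff_le_exp four_pos]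
      linarith
    have hr : 0 ≤ 1 / 4 - Real.exp (-2 * s) := by
      rw [neg_mul, Real.exp_neg, ← one_div, ← hsq, sub_nonneg]
      exact one_div_le_one_div_of_le four_pos hfour_le
    rw [meanPieceLength_of_four_le_sq hfour_le (Real.sqrt_nonneg _)
      (by rw [Real.sq_sqrt hr, neg_mul, Real.exp_neg, hsq, one_div (Real.exp _)]), hsq]
    field_simp
    ring

lemma integral_pow_mul_etaLog (n : ℕ) : ∫ s, s ^ n * etaLog s =
    6 / Real.pi ^ 2 * ∫ t in Ioi 0, t * (Real.log t ^ n * meanPieceLength t) := by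
  rw [← Real.range_exp, ← image_univ, integral_image_eq_integral_abs_deriv_smul MeasurableSet.univ
    (fun s _ => (Real.hasDerivAt_exp s).hasDerivWithinAt) Real.exp_injective.injOn,
    setIntegral_univ, ← integral_const_mul]
  refine integral_congr_ae (.of_forall fun s => ?_)
  simp only [etaLog_eq, Real.abs_exp, Real.log_exp, smul_eq_mul]
  ring

end LimitingDensity

/-! ### Fourier modes of the logarithmic moments -/

section FourierModes

open Set

lemma norm_fourier_sub_le (m : ℤ) (x y : ℝ) :
    ‖fourier m (x : UnitAddCircle) - fourier m (y : UnitAddCircle)‖ ≤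
      2 * Real.pi * |(m : ℝ)| * |x - y| := by
  have hexp (z : ℝ) : fourier m (z : UnitAddCircle) =
      Complex.exp (Complex.I * (2 * Real.pi * m * z : ℝ)) := by
    rw [fourier_coe_apply]
    congr 1
    push_cast
    ring
  have hfactor : fourier m (x : UnitAddCircle) - fourier m (y : UnitAddCircle) =
      fourier m (y : UnitAddCircle) *
        (Complex.exp (Complex.I * (2 * Real.pi * m * (x - y) : ℝ)) - 1) := by
    rw [hexp, hexp, mul_sub, mul_one, ← Complex.exp_add]
    congr 2
    push_cast
    ring
  calc _ = ‖Complex.exp (Complex.I * (2 * Real.pi * m * (x - y) : ℝ)) - 1‖ := by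
        rw [hfactor, norm_mul, fourier_apply, Circle.norm_coe, one_mul]
    _ ≤ ‖2 * Real.pi * m * (x - y)‖ := Real.norm_exp_I_mul_ofReal_sub_one_le
    _ = 2 * Real.pi * |(m : ℝ)| * |x - y| := by
        rw [Real.norm_eq_abs, abs_mul, abs_mul, abs_of_pos Real.two_pi_pos]

lemma continuous_fourier_coe (m : ℤ) : Continuous fun x : ℝ => fourier m (x : UnitAddCircle) :=
  (fourier m).continuous.comp (AddCircle.continuous_mk' 1)

lemma volume_fareyPiece_lt_top (δ : ℝ) (q : ℕ) (v : (ZMod q)ˣ) : volume (fareyPiece δ q v) < ⊤ :=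
  (measure_mono fun _ hx => Metric.mem_ball.2 hx.1).trans_lt
    (measure_ball_lt_top (x := (v.val.val / q : ℝ)))

variable {q : ℕ} [NeZero q] {h : ℝ}

lemma norm_setIntegral_fareyPiece_fourier_sub_le (δ : ℝ) (v : (ZMod q)ˣ) (m : ℤ) :
    ‖(∫ x in fareyPiece δ q v, fourier m (x : UnitAddCircle)) -
      ZMod.stdAddChar ((m : ZMod q) * v.val) * (volume.real (fareyPiece δ q v) : ℂ)‖ ≤
      Real.pi * |(m : ℝ)| * δ * volume.real (fareyPiece δ q v) := by
  have hfin := volume_fareyPiece_lt_top δ q v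
  have hcenter : ZMod.stdAddChar ((m : ZMod q) * v.val) * (volume.real (fareyPiece δ q v) : ℂ) =
      ∫ _ in fareyPiece δ q v, fourier m ((v.val.val / q : ℝ) : UnitAddCircle) := by
    rw [← ZMod.toAddCircle_apply, fourier_toAddCircle, setIntegral_const, Complex.real_smul,
      mul_comm]
  have hint : IntegrableOn (fun x : ℝ => fourier m (x : UnitAddCircle)) (fareyPiece δ q v) :=
    Measure.integrableOn_of_bounded (M := 1) hfin.ne
      (continuous_fourier_coe m).aestronglyMeasurable
      (.of_forall fun _ => by rw [fourier_apply, Circle.norm_coe])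
  rw [hcenter, ← integral_sub hint (integrableOn_const hfin.ne)]
  refine norm_setIntegral_le_of_norm_le_const hfin fun x hx => ?_
  calc _ ≤ 2 * Real.pi * |(m : ℝ)| * |x - v.val.val / q| := norm_fourier_sub_le m _ _
    _ ≤ 2 * Real.pi * |(m : ℝ)| * (δ / 2) := by grw [hx.1]
    _ = Real.pi * |(m : ℝ)| * δ := by ring

lemma volume_real_fareyPiece_sq (hh : 0 < h) (hh1 : h < 1) (v : (ZMod q)ˣ) :
    volume.real (fareyPiece (h ^ 2) q v) =
      h ^ 2 * pieceLength (h * q) ‖ZMod.toAddCircle v⁻¹.val‖ := by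
  rw [volume_real_fareyPiece (by positivity) (pow_lt_one₀ hh.le hh1 two_ne_zero),
    Real.sqrt_sq hh.le]

lemma sum_volume_real_fareyPiece_sq (hh : 0 < h) (hh1 : h < 1) :
    ∑ v, volume.real (fareyPiece (h ^ 2) q v) = h * (h * q *
      ((∑ v : (ZMod q)ˣ, pieceLength (h * q) ‖ZMod.toAddCircle v⁻¹.val‖) / q)) := by
  have hq : (q : ℝ) ≠ 0 := NeZero.ne _
  simp only [volume_real_fareyPiece_sq hh hh1, ← Finset.mul_sum]
  field_simp

lemma sum_stdAddChar_mul_volume_real_fareyPiece_sq (hh : 0 < h) (hh1 : h < 1) (m : ℤ) :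
    ∑ v : (ZMod q)ˣ, ZMod.stdAddChar ((m : ZMod q) * v.val) *
        (volume.real (fareyPiece (h ^ 2) q v) : ℂ) =
      h * (h * q * discrepancy q m (pieceLengthMap (h * q)) +
        (if m = 0 then h * q.totient * meanPieceLength (h * q) else 0 : ℂ)) := by
  have hq : (q : ℂ) ≠ 0 := NeZero.ne _
  simp only [discrepancy, LinearMap.coe_mk, AddHom.coe_mk, integral_pieceLengthMap]
  simp only [pieceLengthMap_apply, volume_real_fareyPiece_sq hh hh1, Complex.ofReal_mul,
    Complex.ofReal_pow, mul_left_comm _ ((h : ℂ) ^ 2), ← Finset.mul_sum]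
  split_ifs <;> field_simp <;> ring

/-- The deviation, rescaled by `h = √δ`, of the contribution of the fractions of denominator `q` to
the `m`-th Fourier mode from its value under equidistribution of the inverses modulo `q`. -/
noncomputable def modeDeviation (m : ℤ) (h : ℝ) (q : ℕ) [NeZero q] : ℂ :=
  (∑ v, ∫ x in fareyPiece (h ^ 2) q v, fourier m (x : UnitAddCircle)) / h -
    (if m = 0 then h * q.totient * meanPieceLength (h * q) else 0 : ℂ)

lemma norm_modeDeviation_sub_le (hh : 0 < h) (hh1 : h < 1) (m : ℤ) :
    ‖modeDeviation m h q - h * q * discrepancy q m (pieceLengthMap (h * q))‖ ≤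
      Real.pi * |(m : ℝ)| * h ^ 2 * (h * q) := by
  have hne : (h : ℂ) ≠ 0 := mod_cast hh.ne'
  have hdev : modeDeviation m h q - h * q * discrepancy q m (pieceLengthMap (h * q)) =
      (∑ v : (ZMod q)ˣ, ((∫ x in fareyPiece (h ^ 2) q v, fourier m (x : UnitAddCircle)) -
        ZMod.stdAddChar ((m : ZMod q) * v.val) *
          (volume.real (fareyPiece (h ^ 2) q v) : ℂ))) / h := by
    rw [Finset.sum_sub_distrib, sum_stdAddChar_mul_volume_real_fareyPiece_sq hh hh1, sub_div,
      mul_div_cancel_left₀ _ hne, modeDeviation]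
    ring
  rw [hdev, norm_div, Complex.norm_real, Real.norm_of_nonneg hh.le, div_le_iff₀ hh]
  calc _ ≤ ∑ v : (ZMod q)ˣ, Real.pi * |(m : ℝ)| * h ^ 2 * volume.real (fareyPiece (h ^ 2) q v) :=
        norm_sum_le_of_le _ fun v _ => norm_setIntegral_fareyPiece_fourier_sub_le _ v m
    _ ≤ Real.pi * |(m : ℝ)| * h ^ 2 * (h * (h * q * 1)) := by
        rw [← Finset.mul_sum, sum_volume_real_fareyPiece_sq hh hh1]
        grw [sum_pieceLength_div_le_one]
    _ = Real.pi * |(m : ℝ)| * h ^ 2 * (h * q) * h := by ring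

lemma norm_log_pow_mul_totient_mul_meanPieceLength_le (n : ℕ) (hh : 0 < h) :
    |Real.log (h * q)| ^ n * (h * q.totient * meanPieceLength (h * q)) ≤ envelope n (h * q) := by
  refine le_trans ?_
    (abs_log_pow_mul_meanPieceLength_le n (mul_pos hh (mod_cast NeZero.pos q : (0 : ℝ) < q)))
  have := meanPieceLength_nonneg (h * q)
  gcongr
  exact q.totient_le

lemma antitoneOn_two_mul_envelope (n : ℕ) : AntitoneOn (fun t => 2 * envelope n t) (Ioi 0) :=
  fun _ hs _ ht hst => mul_le_mul_of_nonneg_left (antitoneOn_envelope n hs ht hst) zero_le_two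

lemma norm_modeDeviation_mul_log_pow_le (hh : 0 < h) (hh1 : h < 1) (m : ℤ) (n : ℕ) :
    ‖modeDeviation m h q * (Real.log (h * q) : ℂ) ^ n‖ ≤ 2 * envelope n (h * q) := by
  have hmode : ‖(∑ v, ∫ x in fareyPiece (h ^ 2) q v, fourier m (x : UnitAddCircle)) / h‖ ≤
      h * q * ((∑ v : (ZMod q)ˣ, pieceLength (h * q) ‖ZMod.toAddCircle v⁻¹.val‖) / q) := by
    rw [norm_div, Complex.norm_real, Real.norm_of_nonneg hh.le, div_le_iff₀' hh,
      ← sum_volume_real_fareyPiece_sq hh hh1]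
    refine norm_sum_le_of_le _ fun v _ => ?_
    simpa using norm_setIntegral_le_of_norm_le_const (volume_fareyPiece_lt_top (h ^ 2) q v)
      (f := fun x : ℝ => fourier m (x : UnitAddCircle)) (C := 1)
      fun x _ => by rw [fourier_apply, Circle.norm_coe]
  have hmean : ‖(if m = 0 then h * q.totient * meanPieceLength (h * q) else 0 : ℂ)‖ ≤
      h * q.totient * meanPieceLength (h * q) := by
    have := meanPieceLength_nonneg (h * q)
    split_ifs
    · simp [abs_of_pos hh, abs_of_nonneg this]
    · simpa using by positivity
  rw [norm_mul, norm_pow, Complex.norm_real, Real.norm_eq_abs, mul_comm, two_mul]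
  grw [modeDeviation, norm_sub_le, hmode, hmean, mul_add,
    abs_log_pow_mul_sum_pieceLength_le n q hh hh1,
    norm_log_pow_mul_totient_mul_meanPieceLength_le n hh]

lemma tendsto_floor_div_nhdsGT_zero_atTop {t : ℝ} (ht : 0 < t) :
    Tendsto (fun h : ℝ => ⌊t / h⌋₊) (𝓝[>] 0) atTop :=
  tendsto_nat_floor_atTop.comp (tendsto_inv_nhdsGT_zero.const_mul_atTop ht)

lemma tendsto_modeDeviation_floor (m : ℤ) {t : ℝ} (ht : 0 < t) :
    Tendsto (fun h : ℝ => modeDeviation m h (⌊t / h⌋₊ + 1)) (𝓝[>] 0) (𝓝 0) := by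
  have hscale : Tendsto (fun h : ℝ => h * (⌊t / h⌋₊ + 1 : ℕ)) (𝓝[>] 0) (𝓝 t) := by
    simpa only [Nat.cast_add_one] using tendsto_mul_floor_div_add_one ht
  have hmain : Tendsto (fun h : ℝ => (h * (⌊t / h⌋₊ + 1 : ℕ) : ℂ) *
      discrepancy (⌊t / h⌋₊ + 1) m (pieceLengthMap (h * (⌊t / h⌋₊ + 1 : ℕ)))) (𝓝[>] 0) (𝓝 0) := by
    simpa using ((Complex.continuous_ofReal.tendsto t).comp hscale).mul
      (tendsto_discrepancy_of_tendsto m (tendsto_floor_div_nhdsGT_zero_atTop ht)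
        ((pieceLengthMap.continuous.tendsto t).comp hscale))
  have hid : Tendsto (fun h : ℝ => h) (𝓝[>] 0) (𝓝 0) := tendsto_id.mono_left nhdsWithin_le_nhds
  refine squeeze_zero_norm' (a := fun h : ℝ => Real.pi * |(m : ℝ)| * h ^ 2 *
    (h * (⌊t / h⌋₊ + 1 : ℕ)) + ‖(h * (⌊t / h⌋₊ + 1 : ℕ) : ℂ) *
      discrepancy (⌊t / h⌋₊ + 1) m (pieceLengthMap (h * (⌊t / h⌋₊ + 1 : ℕ)))‖) ?_ ?_
  · filter_upwards [Ioo_mem_nhdsGT one_pos] with h hh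
    grw [← norm_modeDeviation_sub_le hh.1 hh.2 m, ← norm_add_le, sub_add_cancel]
  · simpa using (((hid.pow 2).const_mul _).mul hscale).add hmain.norm

lemma integral_fourier_mul_log_pow_qmin (hh : 0 < h) (hh1 : h < 1) (m : ℤ) (n : ℕ) :
    ∫ x : ℝ in Ioc 0 1, fourier m (x : UnitAddCircle) * (Real.log (h * qmin x (h ^ 2)) : ℂ) ^ n =
      h • ∑' k : ℕ, modeDeviation m h (k + 1) * (Real.log (h * (k + 1)) : ℂ) ^ n +
        if m = 0 then (h : ℂ) ^ 2 * ∑' k : ℕ, ((k + 1).totient : ℂ) *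
          ((Real.log (h * (k + 1)) : ℂ) ^ n * meanPieceLength (h * (k + 1))) else 0 := by
  have hne : (h : ℂ) ≠ 0 := mod_cast hh.ne'
  have hsum := hasSum_integral_mul_comp_qmin (by positivity) (pow_lt_one₀ hh.le hh1 two_ne_zero)
    (continuous_fourier_coe m).locallyIntegrable
    (fun x => by simp only [AddCircle.coe_add, AddCircle.coe_period, add_zero])
    fun q => (Real.log (h * q) : ℂ) ^ n
  have hdev : Summable fun k : ℕ =>
      h • (modeDeviation m h (k + 1) * (Real.log (h * (k + 1)) : ℂ) ^ n) :=
    (hasSum_smul_of_integrableOn_comp_floor_div hh <| integrableOn_comp_floor_div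
      (g := fun t => 2 * envelope n t) (antitoneOn_two_mul_envelope n)
      ((integrableOn_envelope n).const_mul 2) hh fun k => by
        simpa only [Nat.cast_add_one] using
          norm_modeDeviation_mul_log_pow_le (q := k + 1) hh hh1 m n).summable
  rw [← hsum.tsum_eq, ← tsum_const_smul'', ← sub_eq_iff_eq_add', ← hsum.summable.tsum_sub hdev]
  simp only [modeDeviation, Nat.cast_add_one, Complex.real_smul]
  split_ifs
  · rw [← tsum_mul_left]
    refine tsum_congr fun k => ?_
    field_simp
    ring
  · refine (tsum_congr fun k => ?_).trans tsum_zero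
    field_simp
    ring

lemma tendsto_integral_fourier_mul_log_pow_qmin (m : ℤ) (n : ℕ) :
    Tendsto (fun h : ℝ => ∫ x : ℝ in Ioc 0 1,
        fourier m (x : UnitAddCircle) * (Real.log (h * qmin x (h ^ 2)) : ℂ) ^ n)
      (𝓝[>] 0) (𝓝 (if m = 0 then ((∫ s, s ^ n * etaLog s : ℝ) : ℂ) else 0)) := by
  have hdev : Tendsto (fun h : ℝ => h • ∑' k : ℕ, modeDeviation m h (k + 1) *
      (Real.log (h * (k + 1)) : ℂ) ^ n) (𝓝[>] 0) (𝓝 0) := by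
    simpa using tendsto_smul_tsum_integral_Ioi (G := fun _ => (0 : ℂ))
      (g := fun t => 2 * envelope n t) (antitoneOn_two_mul_envelope n)
      ((integrableOn_envelope n).const_mul 2)
      (by
        filter_upwards [Ioo_mem_nhdsGT one_pos] with h hh k
        simpa only [Nat.cast_add_one] using
          norm_modeDeviation_mul_log_pow_le (q := k + 1) hh.1 hh.2 m n)
      fun t ht => by
        simpa using (tendsto_modeDeviation_floor m ht).mul <|
          ((Complex.continuous_ofReal.tendsto _).comp
            ((Real.continuousAt_log ht.ne').tendsto.comp (tendsto_mul_floor_div_add_one ht))).pow n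
  have hmean := tendsto_sq_mul_tsum_totient (antitoneOn_envelope n) (integrableOn_envelope n)
    (c := fun t => (Real.log t : ℂ) ^ n * meanPieceLength t)
    (((Complex.continuous_ofReal.comp_continuousOn
      (Real.continuousOn_log.mono fun t ht => (mem_Ioi.1 ht).ne')).pow n).mul
        (Complex.continuous_ofReal.comp continuous_meanPieceLength).continuousOn)
    fun t ht => by
      simpa [abs_of_pos ht, abs_of_nonneg (meanPieceLength_nonneg t), mul_left_comm] using
        abs_log_pow_mul_meanPieceLength_le n ht
  have hmoment : ((∫ s, s ^ n * etaLog s : ℝ) : ℂ) = 6 / (Real.pi : ℂ) ^ 2 *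
      ∫ t in Ioi (0 : ℝ), t * ((Real.log t : ℂ) ^ n * meanPieceLength t) := by
    rw [integral_pow_mul_etaLog]
    push_cast [← integral_complex_ofReal]
    rfl
  rw [hmoment]
  refine Tendsto.congr' (eventually_of_mem (Ioo_mem_nhdsGT one_pos) fun h hh =>
    (integral_fourier_mul_log_pow_qmin hh.1 hh.2 m n).symm) ?_
  split_ifs
  · simpa using hdev.add hmean
  · simpa using hdev

end FourierModes

/-! ### Weak convergence from convergence of Fourier coefficients -/

section WeakConvergence

open AddCircle

lemma tendsto_inner_of_tendsto_repr {𝕜 E ι κ : Type*} [RCLike 𝕜] [NormedAddCommGroup E]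
    [InnerProductSpace 𝕜 E] (b : HilbertBasis κ 𝕜 E) {l : Filter ι} {F : ι → E} {f : E} {C : ℝ}
    (hF : ∀ᶠ i in l, ‖F i‖ ≤ C)
    (hrepr : ∀ k, Tendsto (fun i => b.repr (F i) k) l (𝓝 (b.repr f k))) (g : E) :
    Tendsto (fun i => inner 𝕜 g (F i)) l (𝓝 (inner 𝕜 g f)) := by
  have hdiff : Tendsto (fun i => innerₛₗ 𝕜 (F i - f) g) l (𝓝 0) := by
    refine tendsto_zero_of_span_topologicalClosure_eq_top (C := C + ‖f‖) ?_ b.dense_span ?_ g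
    · filter_upwards [hF] with i hi x
      grw [innerₛₗ_apply_apply, norm_inner_le_norm, norm_sub_le, hi]
    · rintro _ ⟨k, rfl⟩
      have hk := tendsto_sub_nhds_zero_iff.2 (hrepr k)
      simp only [b.repr_apply_apply, ← inner_sub_right] at hk
      rw [tendsto_zero_iff_norm_tendsto_zero] at hk ⊢
      simpa only [innerₛₗ_apply_apply, norm_inner_symm (b k)] using hk
  rw [← tendsto_sub_nhds_zero_iff]
  rw [tendsto_zero_iff_norm_tendsto_zero] at hdiff ⊢
  simpa only [innerₛₗ_apply_apply, ← inner_sub_right, norm_inner_symm g] using hdiff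

lemma lpNorm_two_sq {α E : Type*} [MeasurableSpace α] [NormedAddCommGroup E] {μ : Measure α}
    {f : α → E} (hf : AEStronglyMeasurable f μ) : lpNorm f 2 μ ^ 2 = ∫ a, ‖f a‖ ^ 2 ∂μ := by
  rw [lpNorm_eq_integral_norm_rpow_toReal two_ne_zero ENNReal.ofNat_ne_top hf, ENNReal.toReal_ofNat,
    ← Real.rpow_natCast, ← Real.rpow_mul (by positivity)]
  norm_num

variable {T : ℝ} [Fact (0 < T)]

lemma tendsto_setIntegral_of_tendsto_fourierCoeff {ι : Type*} {l : Filter ι}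
    {f : ι → AddCircle T → ℂ} {g : AddCircle T → ℂ} {C : ℝ}
    (hf : ∀ᶠ i in l, MemLp (f i) 2 haarAddCircle)
    (hbdd : ∀ᶠ i in l, ∫ y, ‖f i y‖ ^ 2 ∂haarAddCircle ≤ C) (hg : MemLp g 2 haarAddCircle)
    (hcoeff : ∀ m, Tendsto (fun i => fourierCoeff (f i) m) l (𝓝 (fourierCoeff g m)))
    {s : Set (AddCircle T)} (hs : MeasurableSet s) :
    Tendsto (fun i => ∫ y in s, f i y ∂haarAddCircle) l (𝓝 (∫ y in s, g y ∂haarAddCircle)) := by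
  rcases l.eq_or_neBot with rfl | hl
  · exact tendsto_bot
  obtain ⟨F, hF⟩ := Eventually.choice
    (r := fun i (u : Lp ℂ 2 (haarAddCircle (T := T))) => u =ᵐ[haarAddCircle] f i)
    (hf.mono fun i hi => ⟨hi.toLp, hi.coeFn_toLp⟩)
  have hnorm : ∀ᶠ i in l, ‖F i‖ ≤ √C := by
    filter_upwards [hF, hf, hbdd] with i hi hfi hCi
    rw [Lp.norm_def, eLpNorm_congr_ae hi, toReal_eLpNorm hfi.1]
    exact Real.le_sqrt_of_sq_le (by rwa [lpNorm_two_sq hfi.1])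
  have hweak := tendsto_inner_of_tendsto_repr fourierBasis hnorm (f := hg.toLp) (fun m => ?_)
    (indicatorConstLp 2 hs (measure_ne_top _ _) 1)
  · simp only [L2.inner_indicatorConstLp_one] at hweak
    rw [setIntegral_congr_ae hs (hg.coeFn_toLp.mono fun _ h _ => h)] at hweak
    refine hweak.congr' (hF.mono fun i hi => setIntegral_congr_ae hs (hi.mono fun _ h _ => h))
  · simp only [fourierBasis_repr, fourierCoeff_congr_ae hg.coeFn_toLp]
    exact (hcoeff m).congr' (hF.mono fun i hi => congrFun (fourierCoeff_congr_ae hi.symm) m)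

lemma fourierCoeff_const (c : ℂ) (m : ℤ) :
    fourierCoeff (fun _ : AddCircle T => c) m = if m = 0 then c else 0 := by
  have hconst : (fun _ : AddCircle T => c) = fun y => c * fourier 0 y := by
    simp only [fourier_zero, mul_one]
  rw [hconst, fourierCoeff.const_mul, fourierCoeff_fourier, Pi.single_apply, mul_ite, mul_one,
    mul_zero]

lemma exists_measurableSet_forall_setIntegral_eq (E : Type*) [NormedAddCommGroup E]
    [NormedSpace ℝ E] {a : ℝ} {D : Set ℝ} (hDm : MeasurableSet D)
    (hD : D ⊆ Set.Icc a (a + T)) : ∃ s : Set (AddCircle T), MeasurableSet s ∧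
      ∀ f : AddCircle T → E, ∫ y in s, f y = ∫ x in D, f (x : AddCircle T) := by
  have hs : MeasurableSet ((fun y => (measurableEquivIoc T a y : ℝ)) ⁻¹' D) :=
    (measurable_subtype_coe.comp (measurableEquivIoc T a).measurable) hDm
  refine ⟨_, hs, fun f => ?_⟩
  have hae : (Set.Ioc a (a + T) ∩ D : Set ℝ) =ᵐ[volume] D := by
    simpa only [Set.inter_eq_right.2 hD] using
      (Ioc_ae_eq_Icc (μ := volume) (a := a) (b := a + T)).inter (EventuallyEq.refl _ D)
  rw [← integral_indicator hs, ← AddCircle.integral_preimage T a, ← setIntegral_congr_set hae,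
    ← setIntegral_indicator hDm]
  refine setIntegral_congr_fun measurableSet_Ioc fun x hx => ?_
  have hx' : (measurableEquivIoc T a (x : AddCircle T) : ℝ) = x :=
    congrArg Subtype.val (equivIoc_coe_eq hx)
  by_cases hxD : x ∈ D <;> simp [hx', hxD]

end WeakConvergence

section LogMoments

open AddCircle

/-- The rescaled logarithm `log q_min(x, δ) + (1/2) log δ`, in the form `log (√δ q_min(x, δ))` and
as a function of `x` modulo 1. -/
noncomputable def rescaledLog (δ : ℝ) (y : UnitAddCircle) : ℝ :=
  Real.log (√δ * (periodic_qmin δ).lift y)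

variable {δ : ℝ}

lemma rescaledLog_coe (hδ : 0 < δ) (x : ℝ) :
    rescaledLog δ x = Real.log (qmin x δ) + 1 / 2 * Real.log δ := by
  have hq : (qmin x δ : ℝ) ≠ 0 := mod_cast (qmin_pos hδ x).ne'
  rw [rescaledLog, Function.Periodic.lift_coe, Real.log_mul (Real.sqrt_pos.2 hδ).ne' hq,
    Real.log_sqrt hδ.le]
  ring

lemma memLp_rescaledLog_pow (hδ : 0 < δ) (n : ℕ) :
    MemLp (fun y => (rescaledLog δ y : ℂ) ^ n) 2 haarAddCircle := by
  obtain ⟨C, hC⟩ := exists_forall_norm_comp_qmin_le hδ fun q => (Real.log (√δ * q) : ℂ) ^ n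
  have hlift : Measurable (periodic_qmin δ).lift :=
    QuotientAddGroup.measurable_from_quotient.2 (measurable_qmin hδ)
  refine MemLp.of_bound (Measurable.aestronglyMeasurable ?_) C (.of_forall fun y => ?_)
  · unfold rescaledLog
    fun_prop
  · induction y using QuotientAddGroup.induction_on with
    | H x => exact hC x

lemma tendsto_fourierCoeff_rescaledLog_pow (n : ℕ) (m : ℤ) :
    Tendsto (fun δ => fourierCoeff (fun y => (rescaledLog δ y : ℂ) ^ n) m) (𝓝[>] 0)
      (𝓝 (if m = 0 then ((∫ s, s ^ n * etaLog s : ℝ) : ℂ) else 0)) := by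
  have hpos : Set.MapsTo Real.sqrt (Set.Ioi 0) (Set.Ioi 0) := fun δ hδ => Real.sqrt_pos.2 hδ
  have hsqrt : Tendsto Real.sqrt (𝓝[>] 0) (𝓝[>] 0) := by
    simpa only [Real.sqrt_zero] using
      Real.continuous_sqrt.continuousWithinAt.tendsto_nhdsWithin (x := 0) hpos
  have hmode := (tendsto_integral_fourier_mul_log_pow_qmin (-m) n).comp hsqrt
  simp only [neg_eq_zero] at hmode
  refine hmode.congr' (eventually_nhdsWithin_of_forall fun δ hδ => ?_)
  simp only [Function.comp_apply, Real.sq_sqrt (Set.mem_Ioi.1 hδ).le]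
  rw [fourierCoeff_eq_intervalIntegral _ m 0, zero_add,
    intervalIntegral.integral_of_le zero_le_one, div_one, one_smul]
  rfl

lemma eventually_integral_norm_rescaledLog_pow_sq_le (n : ℕ) : ∀ᶠ δ in 𝓝[>] 0,
    ∫ y, ‖(rescaledLog δ y : ℂ) ^ n‖ ^ 2 ∂haarAddCircle ≤ (∫ s, s ^ (2 * n) * etaLog s) + 1 := by
  have hre := (Complex.continuous_re.tendsto _).comp
    (tendsto_fourierCoeff_rescaledLog_pow (2 * n) 0)
  refine (hre.eventually_le_const (by simp)).mono fun δ hδ => le_trans (le_of_eq ?_) hδ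
  have hpow (y : UnitAddCircle) : ‖(rescaledLog δ y : ℂ) ^ n‖ ^ 2 = rescaledLog δ y ^ (2 * n) := by
    rw [norm_pow, Complex.norm_real, Real.norm_eq_abs, ← pow_mul, mul_comm,
      (even_two_mul n).pow_abs]
  simp only [hpow]
  simp only [Function.comp_apply, fourierCoeff, neg_zero, fourier_zero, one_smul,
    ← Complex.ofReal_pow, integral_complex_ofReal, Complex.ofReal_re]

end LogMoments

theorem smallest_denominator_log_moments_general {a : ℝ} {D : Set ℝ} (hD : D ⊆ Set.Icc a (a + 1))
    (hDm : MeasurableSet D) (n : ℕ) :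
    Tendsto (fun δ : ℝ => ∫ x in D, (Real.log (qmin x δ) + (1 / 2) * Real.log δ) ^ n) (𝓝[>] 0)
      (𝓝 ((∫ s : ℝ, s ^ n * etaLog s) * (volume D).toReal)) := by
  obtain ⟨s, hs, hsD⟩ := exists_measurableSet_forall_setIntegral_eq ℂ hDm hD
  have hhaar : (volume : Measure UnitAddCircle) = AddCircle.haarAddCircle := by
    simp [AddCircle.volume_eq_smul_haarAddCircle]
  set μ : ℝ := ∫ s, s ^ n * etaLog s
  have hweak := tendsto_setIntegral_of_tendsto_fourierCoeff (l := 𝓝[>] 0)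
    (eventually_nhdsWithin_of_forall fun δ hδ => memLp_rescaledLog_pow hδ n)
    (eventually_integral_norm_rescaledLog_pow_sq_le n) (memLp_const (μ : ℂ))
    (fun m => by rw [fourierCoeff_const]; exact tendsto_fourierCoeff_rescaledLog_pow n m) hs
  rw [← hhaar, hsD, setIntegral_const] at hweak
  refine Tendsto.congr' (eventually_nhdsWithin_of_forall fun δ hδ => ?_)
    (by simpa [mul_comm, Measure.real] using (Complex.continuous_re.tendsto _).comp hweak)
  simp only [Function.comp_apply, hsD, rescaledLog_coe hδ, ← Complex.ofReal_pow,
    integral_complex_ofReal, Complex.ofReal_re]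

theorem smallest_denominator_log_moments
    (D : Set ℝ) (hD : D ⊆ Set.Icc 0 1) (hDI : D.OrdConnected) (n : ℕ) :
    Tendsto (fun δ : ℝ =>
        ∫ x in D, (Real.log (qmin x δ) + (1 / 2) * Real.log δ) ^ n)
      (nhdsWithin 0 (Set.Ioi 0))
      (nhds ((∫ s : ℝ, s ^ n * etaLog s) * (volume D).toReal)) :=
  smallest_denominator_log_moments_general (by rwa [zero_add]) hDI.measurableSet n
end

section
/- The function η_log is nonnegative on ℝ and ∫_ℝ η_log(s) ds = 1; that is, η_log is a probability density on ℝ. -/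
open MeasureTheory

/-!
For `s > log 2`, let `p` be the larger root of `p * (1 - p) = e⁻²ˢ`. In terms of `p` the last branch
of `etaLog` is `6 / π² * (2 - 2 / p - 4 * log p)`, an elementary function whose primitive in `s`
involves only logarithms and the dilogarithm `Li₂ (1 - p)`. As `s` runs from `log 2` to `∞`, `p`
runs from `1 / 2` to `1`, so the total mass is elementary apart from `Li₂ (1 / 2)`, which Euler's
reflection formula evaluates. Nonnegativity of both nontrivial branches reduces to the Padé bound
`2 * x / (x + 2) ≤ log (1 + x)`.
-/

section Dilogarithm

open Real Set

/-- The dilogarithm `Li₂ x = ∑ₙ xⁿ / n²` (sum over `n ≥ 1`) of a real number `x`. The series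
converges only for `|x| ≤ 1`; elsewhere the value is `0`. It enters the primitive of the last branch
of `etaLog`. -/
noncomputable def dilog (x : ℝ) : ℝ := ∑' n : ℕ, x ^ (n + 1) / ((n : ℝ) + 1) ^ 2

lemma hasSum_one_div_succ_sq : HasSum (fun n : ℕ ↦ 1 / ((n : ℝ) + 1) ^ 2) (π ^ 2 / 6) := by
  simpa using (hasSum_nat_add_iff' 1).2 hasSum_zeta_two

@[simp]
lemma dilog_zero : dilog 0 = 0 := by simp [dilog]

@[simp]
lemma dilog_one : dilog 1 = π ^ 2 / 6 := by
  simpa only [dilog, one_pow] using hasSum_one_div_succ_sq.tsum_eq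

lemma continuousOn_dilog : ContinuousOn dilog (Icc (-1) 1) := by
  refine continuousOn_tsum (fun n ↦ by fun_prop) hasSum_one_div_succ_sq.summable fun n x hx ↦ ?_
  rw [norm_div, norm_pow, norm_eq_abs, norm_of_nonneg (by positivity)]
  gcongr
  exact pow_le_one₀ (abs_nonneg x) (abs_le.2 hx)

lemma hasDerivAt_dilog_tsum {x : ℝ} (hx : |x| < 1) :
    HasDerivAt dilog (∑' n : ℕ, x ^ n / ((n : ℝ) + 1)) x := by
  obtain ⟨r, hxr, hr⟩ := exists_between hx
  have hr0 : 0 < r := (abs_nonneg x).trans_lt hxr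
  refine hasDerivAt_tsum_of_isPreconnected (t := Ioo (-r) r) (y₀ := 0)
    (g := fun (n : ℕ) (y : ℝ) ↦ y ^ (n + 1) / ((n : ℝ) + 1) ^ 2)
    (g' := fun (n : ℕ) (y : ℝ) ↦ y ^ n / ((n : ℝ) + 1))
    (summable_geometric_of_lt_one hr0.le hr) isOpen_Ioo isPreconnected_Ioo
    (fun n y _ ↦ ?_) (fun n y hy ↦ ?_) ⟨by linarith, hr0⟩ (by simp) (abs_lt.1 hxr)
  · refine ((hasDerivAt_pow (n + 1) y).div_const _).congr_deriv ?_
    push_cast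
    field_simp
  · rw [norm_div, norm_pow, norm_eq_abs, norm_of_nonneg (by positivity)]
    calc |y| ^ n / ((n : ℝ) + 1) ≤ |y| ^ n := div_le_self (by positivity) (by simp)
      _ ≤ r ^ n := by gcongr; exact (abs_lt.2 hy).le

lemma hasDerivAt_dilog {x : ℝ} (hx : |x| < 1) (hx0 : x ≠ 0) :
    HasDerivAt dilog (-log (1 - x) / x) x := by
  convert hasDerivAt_dilog_tsum hx using 1
  rw [← ((hasSum_pow_div_log_of_abs_lt_one hx).div_const x).tsum_eq]
  congr with n
  rw [div_right_comm, pow_succ, mul_div_cancel_right₀ _ hx0]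

lemma hasDerivAt_dilog_one_sub {x : ℝ} (hx0 : 0 < x) (hx2 : x < 2) (hx1 : x ≠ 1) :
    HasDerivAt (fun y ↦ dilog (1 - y)) (log x / (1 - x)) x := by
  have hx : |1 - x| < 1 := abs_lt.2 ⟨by linarith, by linarith⟩
  refine ((hasDerivAt_dilog hx (sub_ne_zero.2 hx1.symm)).comp_const_sub 1 x).congr_deriv ?_
  rw [sub_sub_cancel, neg_div, neg_neg]

lemma continuousOn_dilog_one_sub : ContinuousOn (fun y ↦ dilog (1 - y)) (Icc 0 2) :=
  continuousOn_dilog.comp (by fun_prop) fun x hx ↦ ⟨by linarith [hx.2], by linarith [hx.1]⟩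

lemma continuous_log_mul_log_one_sub : Continuous fun x : ℝ ↦ log x * log (1 - x) := by
  have continuousAt_of_ne_one {x : ℝ} (hx : x ≠ 1) :
      ContinuousAt (fun x ↦ log x * log (1 - x)) x := by
    rcases eq_or_ne x 0 with rfl | hx0
    · -- `log (1 - x) / x` extends continuously to `0`, where `x * log x` is continuous.
      have hdiff : DifferentiableAt ℝ (fun x : ℝ ↦ log (1 - x)) 0 :=
        DifferentiableAt.log (by fun_prop) (by norm_num)
      refine (continuous_mul_log.continuousAt.mul (continuousAt_dslope_same.2 hdiff)).congr ?_
      filter_upwards with y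
      have hslope := sub_smul_dslope (fun x : ℝ ↦ log (1 - x)) 0 y
      simp only [smul_eq_mul, sub_zero, log_one] at hslope
      rw [← hslope, Pi.mul_apply]
      ring
    · exact (continuousAt_log hx0).mul (ContinuousAt.log (by fun_prop) (sub_ne_zero.2 hx.symm))
  refine continuous_iff_continuousAt.2 fun x ↦ ?_
  rcases eq_or_ne x 1 with rfl | hx
  · have hsymm := ContinuousAt.comp_of_eq (continuousAt_of_ne_one zero_ne_one)
      (f := fun x : ℝ ↦ 1 - x) (x := 1) (by fun_prop) (sub_self 1)
    simpa only [Function.comp_def, sub_sub_cancel, mul_comm] using hsymm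
  · exact continuousAt_of_ne_one hx

/-- **Euler's reflection formula** for the dilogarithm. -/
theorem dilog_add_dilog_one_sub {x : ℝ} (hx : x ∈ Icc 0 1) :
    dilog x + dilog (1 - x) = π ^ 2 / 6 - log x * log (1 - x) := by
  rcases hx.1.eq_or_lt with rfl | hx0
  · simp
  let F : ℝ → ℝ := fun y ↦ dilog y + dilog (1 - y) + log y * log (1 - y)
  have hcont : ContinuousOn F (Icc 0 x) :=
    ((continuousOn_dilog.mono (Icc_subset_Icc (by norm_num) hx.2)).add
      (continuousOn_dilog_one_sub.mono (Icc_subset_Icc le_rfl (by linarith [hx.2])))).add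
      continuous_log_mul_log_one_sub.continuousOn
  have hderiv : ∀ y ∈ Ioo 0 x, HasDerivAt F 0 y := by
    intro y hy
    have hy0 : 0 < y := hy.1
    have hy1 : y < 1 := hy.2.trans_le hx.2
    have hlog : HasDerivAt (fun z ↦ log (1 - z)) (-(1 - y)⁻¹) y :=
      (hasDerivAt_log (sub_pos.2 hy1).ne').comp_const_sub 1 y
    have hdilog := hasDerivAt_dilog (abs_lt.2 ⟨by linarith, hy1⟩) hy0.ne'
    refine ((hdilog.add (hasDerivAt_dilog_one_sub hy0 (by linarith) hy1.ne)).add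
      ((hasDerivAt_log hy0.ne').mul hlog)).congr_deriv ?_
    ring
  obtain ⟨y, -, hy⟩ := exists_hasDerivAt_eq_slope F (fun _ ↦ 0) hx0 hcont hderiv
  have hF : F x = F 0 := by
    rwa [eq_comm, div_eq_zero_iff, or_iff_left (sub_pos.2 hx0).ne', sub_eq_zero] at hy
  simp only [F, dilog_zero, sub_zero, dilog_one, log_zero, zero_mul] at hF
  linarith

lemma dilog_one_half : dilog (1 / 2) = π ^ 2 / 12 - log 2 ^ 2 / 2 := by
  have h := dilog_add_dilog_one_sub (x := 1 / 2) (by norm_num)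
  rw [sub_half, one_div, log_inv] at h
  rw [one_div]
  linarith

end Dilogarithm

section LargerRoot

open Real

/-- The larger root `p` of `p * (1 - p) = c`, for `c ≤ 1 / 4`; at `c = e⁻²ˢ` it is the variable in
which the last branch of `etaLog` becomes elementary. -/
noncomputable def largerRoot (c : ℝ) : ℝ := 1 / 2 + √(1 / 4 - c)

variable {c : ℝ}

lemma sqrt_eq_largerRoot_sub (c : ℝ) : √(1 / 4 - c) = largerRoot c - 1 / 2 := by
  rw [largerRoot, add_sub_cancel_left]

lemma largerRoot_mul_one_sub (hc : c ≤ 1 / 4) : largerRoot c * (1 - largerRoot c) = c := by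
  rw [largerRoot]
  linear_combination -sq_sqrt (sub_nonneg.2 hc)

lemma one_half_le_largerRoot (c : ℝ) : 1 / 2 ≤ largerRoot c :=
  le_add_of_nonneg_right (sqrt_nonneg _)

lemma one_half_lt_largerRoot (hc : c < 1 / 4) : 1 / 2 < largerRoot c :=
  lt_add_of_pos_right _ (sqrt_pos.2 (sub_pos.2 hc))

@[simp]
lemma largerRoot_zero : largerRoot 0 = 1 := by
  rw [largerRoot, sub_zero, show (1 / 4 : ℝ) = (1 / 2) ^ 2 by norm_num, sqrt_sq (by norm_num)]
  norm_num

lemma largerRoot_one_fourth : largerRoot (1 / 4) = 1 / 2 := by simp [largerRoot]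

lemma largerRoot_lt_one (hc : 0 < c) : largerRoot c < 1 := by
  have h : √(1 / 4 - c) < 1 / 2 := (sqrt_lt' (by norm_num)).2 (by linarith)
  rw [largerRoot]
  linarith

lemma continuous_largerRoot : Continuous largerRoot := by
  unfold largerRoot
  fun_prop

lemma hasDerivAt_largerRoot (hc : c < 1 / 4) :
    HasDerivAt largerRoot (-1 / (2 * largerRoot c - 1)) c := by
  refine ((((hasDerivAt_id c).const_sub (1 / 4)).sqrt (sub_pos.2 hc).ne').const_add
    (1 / 2)).congr_deriv ?_
  rw [id, sqrt_eq_largerRoot_sub]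
  ring

end LargerRoot

section Branches

open Real Set Filter Topology

lemma exp_two_mul_log_two : exp (2 * log 2) = 4 := by
  rw [mul_comm, exp_mul, exp_log two_pos]
  norm_num

lemma exp_neg_two_mul_log_two : exp (-2 * log 2) = 1 / 4 := by
  rw [neg_mul, exp_neg, exp_two_mul_log_two, one_div]

lemma exp_neg_two_mul_lt_one_fourth {s : ℝ} (hs : log 2 < s) : exp (-2 * s) < 1 / 4 := by
  rw [← exp_neg_two_mul_log_two]
  exact exp_lt_exp.2 (by linarith)

lemma le_two_mul_log_one_add {x : ℝ} (hx0 : 0 ≤ x) (hx2 : x ≤ 2) : x ≤ 2 * log (1 + x) :=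
  calc x ≤ 2 * (2 * x / (x + 2)) := by
        rw [mul_div_assoc', le_div_iff₀ (by linarith)]
        nlinarith
    _ ≤ 2 * log (1 + x) := by gcongr; exact le_log_one_add_of_nonneg hx0

lemma le_one_add_two_mul_log_one_add {x : ℝ} (hx0 : 0 ≤ x) (hx3 : x ≤ 3) :
    x ≤ 1 + 2 * log (1 + x) :=
  calc x ≤ 1 + 2 * (2 * x / (x + 2)) := by
        field_simp
        nlinarith
    _ ≤ 1 + 2 * log (1 + x) := by gcongr; exact le_log_one_add_of_nonneg hx0

lemma exp_two_mul_le {s : ℝ} (hs0 : 0 ≤ s) (hs : s ≤ log 2) : exp (2 * s) ≤ 2 + 4 * s := by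
  have h1 : 1 ≤ exp (2 * s) := one_le_exp (by linarith)
  have h4 : exp (2 * s) ≤ 4 := exp_two_mul_log_two ▸ exp_le_exp.2 (by linarith)
  have h := le_one_add_two_mul_log_one_add (sub_nonneg.2 h1) (by linarith)
  rw [add_sub_cancel, log_exp] at h
  linarith

lemma two_sub_two_div_sub_four_mul_log_nonneg {p : ℝ} (hp : 1 / 3 ≤ p) (hp1 : p ≤ 1) :
    0 ≤ 2 - 2 / p - 4 * log p := by
  have hp0 : 0 < p := by linarith
  have hinv1 : 1 ≤ p⁻¹ := (one_le_inv₀ hp0).2 hp1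
  have hinv3 : p⁻¹ ≤ 3 := inv_le_of_inv_le₀ three_pos (by linarith)
  have h := le_two_mul_log_one_add (sub_nonneg.2 hinv1) (by linarith)
  rw [add_sub_cancel, log_inv] at h
  rw [div_eq_mul_inv]
  linarith

variable {s : ℝ}

lemma etaLog_of_nonpos (hs : s ≤ 0) : etaLog s = 6 / π ^ 2 * exp (2 * s) :=
  if_pos hs

lemma etaLog_of_mem_Ioc (hs : s ∈ Ioc 0 (log 2)) :
    etaLog s = 6 / π ^ 2 * (-exp (2 * s) + 2 + 4 * s) := by
  rw [etaLog, if_neg hs.1.not_ge, if_pos hs.2]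

lemma etaLog_of_log_two_lt (hs : log 2 < s) :
    etaLog s = 6 / π ^ 2 *
      (2 - 2 / largerRoot (exp (-2 * s)) - 4 * log (largerRoot (exp (-2 * s)))) := by
  have hc := exp_neg_two_mul_lt_one_fourth hs
  have hexp : exp (2 * s) = 1 / (largerRoot (exp (-2 * s)) * (1 - largerRoot (exp (-2 * s)))) := by
    rw [largerRoot_mul_one_sub hc.le, neg_mul, exp_neg, one_div, inv_inv]
  have hp := one_half_lt_largerRoot hc
  have hp1 := largerRoot_lt_one (exp_pos (-2 * s))
  rw [etaLog, if_neg ((log_pos one_lt_two).trans hs).not_ge, if_neg hs.not_ge,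
    sqrt_eq_largerRoot_sub, hexp, add_sub_cancel]
  generalize largerRoot (exp (-2 * s)) = p at *
  have hp0 : p ≠ 0 := by linarith
  have h1p : 1 - p ≠ 0 := by linarith
  field_simp
  ring

theorem etaLog_nonneg (s : ℝ) : 0 ≤ etaLog s := by
  rcases le_or_gt s 0 with hs0 | hs0
  · rw [etaLog_of_nonpos hs0]
    positivity
  rcases le_or_gt s (log 2) with hs | hs
  · rw [etaLog_of_mem_Ioc ⟨hs0, hs⟩]
    exact mul_nonneg (by positivity) (by linarith [exp_two_mul_le hs0.le hs])
  · rw [etaLog_of_log_two_lt hs]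
    exact mul_nonneg (by positivity) (two_sub_two_div_sub_four_mul_log_nonneg
      (by linarith [one_half_le_largerRoot (exp (-2 * s))]) (largerRoot_lt_one (exp_pos _)).le)

lemma integrableOn_etaLog_Iic : IntegrableOn etaLog (Iic 0) :=
  IntegrableOn.congr_fun ((integrableOn_exp_mul_Iic two_pos 0).const_mul _)
    (fun _ hs ↦ (etaLog_of_nonpos hs).symm) measurableSet_Iic

lemma integral_etaLog_Iic : ∫ s in Iic 0, etaLog s = 6 / π ^ 2 * (1 / 2) := by
  rw [setIntegral_congr_fun measurableSet_Iic fun _ hs ↦ etaLog_of_nonpos hs, integral_const_mul,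
    integral_exp_mul_Iic two_pos, mul_zero, exp_zero]

lemma intervalIntegrable_etaLog : IntervalIntegrable etaLog volume 0 (log 2) := by
  have hcont : Continuous fun s : ℝ ↦ 6 / π ^ 2 * (-exp (2 * s) + 2 + 4 * s) := by fun_prop
  refine (hcont.intervalIntegrable 0 (log 2)).congr fun s hs ↦ ?_
  rw [uIoc_of_le (log_nonneg one_le_two)] at hs
  exact (etaLog_of_mem_Ioc hs).symm

lemma intervalIntegral_etaLog :
    ∫ s in (0)..log 2, etaLog s = 6 / π ^ 2 * (-3 / 2 + 2 * log 2 + 2 * log 2 ^ 2) := by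
  have hprim (s : ℝ) : HasDerivAt (fun s ↦ -exp (2 * s) / 2 + 2 * s + 2 * s ^ 2)
      (-exp (2 * s) + 2 + 4 * s) s := by
    have hmul : HasDerivAt (fun s : ℝ ↦ 2 * s) 2 s := hasDerivAt_const_mul 2
    refine (((hmul.exp.neg.div_const 2).add hmul).add
      ((hasDerivAt_pow 2 s).const_mul 2)).congr_deriv ?_
    push_cast
    ring
  rw [intervalIntegral.integral_congr_Ioo_of_le (log_nonneg one_le_two)
      fun s hs ↦ etaLog_of_mem_Ioc (Ioo_subset_Ioc_self hs),
    intervalIntegral.integral_const_mul,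
    intervalIntegral.integral_eq_sub_of_hasDerivAt (fun s _ ↦ hprim s)
      (Continuous.intervalIntegrable (by fun_prop) _ _), exp_two_mul_log_two, mul_zero, exp_zero]
  ring

/-- A primitive of the last branch of `etaLog`, up to the factor `6 / π²`, as a function of the
variable `p = largerRoot (e⁻²ˢ)`; see `hasDerivAt_tailPrimitive_largerRoot`. -/
noncomputable def tailPrimitive (p : ℝ) : ℝ :=
  log p ^ 2 - 2 * log p - 1 / p - 2 * dilog (1 - p)

lemma tailPrimitive_one : tailPrimitive 1 = -1 := by simp [tailPrimitive]

lemma tailPrimitive_one_half :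
    tailPrimitive (1 / 2) = 2 * log 2 ^ 2 + 2 * log 2 - 2 - π ^ 2 / 6 := by
  rw [tailPrimitive, sub_half, dilog_one_half, one_div, log_inv]
  ring

lemma hasDerivAt_tailPrimitive {p : ℝ} (hp0 : 0 < p) (hp1 : p < 1) :
    HasDerivAt tailPrimitive
      ((2 * p - 1) / (2 * (p * (1 - p))) * (2 - 2 / p - 4 * log p)) p := by
  have hlog := hasDerivAt_log hp0.ne'
  have hinv : HasDerivAt (fun p : ℝ ↦ 1 / p) (-(p ^ 2)⁻¹) p := by
    simpa only [one_div] using hasDerivAt_inv hp0.ne'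
  refine ((((hlog.pow 2).sub (hlog.const_mul 2)).sub hinv).sub
    ((hasDerivAt_dilog_one_sub hp0 (by linarith) hp1.ne).const_mul 2)).congr_deriv ?_
  have h1p : 1 - p ≠ 0 := by linarith
  field_simp
  ring

lemma continuousOn_tailPrimitive : ContinuousOn tailPrimitive (Ioc 0 1) := by
  have hne : ∀ p ∈ Ioc (0 : ℝ) 1, p ≠ 0 := fun p hp ↦ hp.1.ne'
  have hlog : ContinuousOn log (Ioc 0 1) := continuousOn_log.mono hne
  have hdilog : ContinuousOn (fun p ↦ dilog (1 - p)) (Ioc 0 1) :=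
    continuousOn_dilog_one_sub.mono fun p hp ↦ ⟨hp.1.le, by linarith [hp.2]⟩
  exact (((hlog.pow 2).sub (hlog.const_mul 2)).sub
    (continuousOn_const.div continuousOn_id hne)).sub (hdilog.const_mul 2)

lemma continuousOn_tailPrimitive_largerRoot :
    ContinuousOn (fun c ↦ tailPrimitive (largerRoot c)) (Ici 0) := by
  refine continuousOn_tailPrimitive.comp continuous_largerRoot.continuousOn fun c hc ↦
    ⟨by linarith [one_half_le_largerRoot c], ?_⟩
  rcases (mem_Ici.1 hc).eq_or_lt with rfl | hc
  · exact largerRoot_zero.le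
  · exact (largerRoot_lt_one hc).le

lemma hasDerivAt_tailPrimitive_largerRoot (hs : log 2 < s) :
    HasDerivAt (fun s ↦ 6 / π ^ 2 * tailPrimitive (largerRoot (exp (-2 * s)))) (etaLog s) s := by
  have hc := exp_neg_two_mul_lt_one_fourth hs
  have hp := one_half_lt_largerRoot hc
  have hp1 := largerRoot_lt_one (exp_pos (-2 * s))
  have hexp : HasDerivAt (fun s ↦ exp (-2 * s)) (exp (-2 * s) * -2) s :=
    (hasDerivAt_const_mul (-2)).exp
  refine (((hasDerivAt_tailPrimitive (by linarith) hp1).comp s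
    ((hasDerivAt_largerRoot hc).comp s hexp)).const_mul _).congr_deriv ?_
  rw [etaLog_of_log_two_lt hs, largerRoot_mul_one_sub hc.le]
  have hp' : 2 * largerRoot (exp (-2 * s)) - 1 ≠ 0 := by linarith
  generalize largerRoot (exp (-2 * s)) = p at hp' ⊢
  field_simp

lemma continuous_tailPrimitive_largerRoot_exp :
    Continuous fun s : ℝ ↦ 6 / π ^ 2 * tailPrimitive (largerRoot (exp (-2 * s))) :=
  (continuousOn_tailPrimitive_largerRoot.comp_continuous (by fun_prop)
    fun s ↦ (exp_pos (-2 * s)).le).const_mul _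

lemma tendsto_tailPrimitive_largerRoot_exp :
    Tendsto (fun s : ℝ ↦ 6 / π ^ 2 * tailPrimitive (largerRoot (exp (-2 * s)))) atTop
      (𝓝 (6 / π ^ 2 * tailPrimitive 1)) := by
  have hexp : Tendsto (fun s : ℝ ↦ exp (-2 * s)) atTop (𝓝[Ici 0] 0) :=
    tendsto_nhdsWithin_iff.2
      ⟨tendsto_exp_atBot.comp (tendsto_id.const_mul_atTop_of_neg (by norm_num)),
        .of_forall fun s ↦ (exp_pos (-2 * s)).le⟩
  have htail := (continuousOn_tailPrimitive_largerRoot 0 self_mem_Ici).tendsto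
  rw [largerRoot_zero] at htail
  exact (htail.comp hexp).const_mul _

lemma integrableOn_etaLog_Ioi : IntegrableOn etaLog (Ioi (log 2)) :=
  integrableOn_Ioi_deriv_of_nonneg
    continuous_tailPrimitive_largerRoot_exp.continuousWithinAt
    (fun _ hs ↦ hasDerivAt_tailPrimitive_largerRoot hs) (fun s _ ↦ etaLog_nonneg s)
    tendsto_tailPrimitive_largerRoot_exp

lemma integral_etaLog_Ioi :
    ∫ s in Ioi (log 2), etaLog s =
      6 / π ^ 2 * (1 - 2 * log 2 - 2 * log 2 ^ 2 + π ^ 2 / 6) := by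
  rw [integral_Ioi_of_hasDerivAt_of_nonneg
    continuous_tailPrimitive_largerRoot_exp.continuousWithinAt
    (fun _ hs ↦ hasDerivAt_tailPrimitive_largerRoot hs) (fun s _ ↦ etaLog_nonneg s)
    tendsto_tailPrimitive_largerRoot_exp, exp_neg_two_mul_log_two, largerRoot_one_fourth,
    tailPrimitive_one, tailPrimitive_one_half]
  ring

end Branches

open Real Set in
theorem etaLog_isProbabilityDensity :
    (∀ s : ℝ, 0 ≤ etaLog s) ∧ Integrable etaLog ∧ (∫ s : ℝ, etaLog s) = 1 := by
  have hIoi : IntegrableOn etaLog (Ioi 0) := by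
    rw [← Ioc_union_Ioi_eq_Ioi (log_nonneg one_le_two)]
    exact intervalIntegrable_etaLog.1.union integrableOn_etaLog_Ioi
  have hint : Integrable etaLog := by
    rw [← integrableOn_univ, ← Iic_union_Ioi (a := 0)]
    exact integrableOn_etaLog_Iic.union hIoi
  refine ⟨etaLog_nonneg, hint, ?_⟩
  calc ∫ s, etaLog s
      = (∫ s in Iic 0, etaLog s) +
          ((∫ s in (0)..log 2, etaLog s) + ∫ s in Ioi (log 2), etaLog s) := by
        rw [intervalIntegral.integral_interval_add_Ioi hIoi integrableOn_etaLog_Ioi,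
          intervalIntegral.integral_Iic_add_Ioi integrableOn_etaLog_Iic hIoi]
    _ = 6 / π ^ 2 * (π ^ 2 / 6) := by
        rw [integral_etaLog_Iic, intervalIntegral_etaLog, integral_etaLog_Ioi]
        ring
    _ = 1 := by field_simp
end
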